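/- arXiv:2409.04814 — 2 statements merged into one kernel-verified Lean document; each statement's English description precedes it below -/
import Mathlib

section
/- Let ω ∈ Ω. There exist C > 0 and X₀ > 0 such that for all X ≥ X₀, (1/X)·∫_X^{2X} Ξ_ψ(x;ω)² dx ≤ C·X²·(log X)⁴. -/
open MeasureTheory Filter Real

noncomputable section

/-- The Cygan–Korányi norm on `ℝ³`. -/
def cyganNorm (u : ℝ × ℝ × ℝ) : ℝ :=
  ((u.1 ^ 2 + u.2.1 ^ 2) ^ 2 + u.2.2 ^ 2) ^ ((1 : ℝ) / 4)

/-- The unit ball for the Cygan–Korányi norm. -/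
def cyganBall : Set (ℝ × ℝ × ℝ) := {u | cyganNorm u ≤ 1}

/-- The Heisenberg dilation `δ_x`. -/
def heisDil (x : ℝ) (u : ℝ × ℝ × ℝ) : ℝ × ℝ × ℝ := (x * u.1, x * u.2.1, x ^ 2 * u.2.2)

/-- Euclidean volume of the Cygan–Korányi unit ball. -/
def volB : ℝ := (volume cyganBall).toReal

/-- `N(x)`: the number of integer lattice points inside `δ_x B`. -/
def latticeCount (x : ℝ) : ℕ :=
  Set.ncard {p : ℤ × ℤ × ℤ | ((p.1 : ℝ), (p.2.1 : ℝ), (p.2.2 : ℝ)) ∈ heisDil x '' cyganBall}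

/-- The error term `E(x;ω)` for the shell count. -/
def Eshell (ω : ℝ → ℝ) (x : ℝ) : ℝ :=
  ((latticeCount (x + ω x) : ℝ) - (latticeCount x : ℝ))
    - volB * ∑ j ∈ Finset.Icc 1 4, (Nat.choose 4 j : ℝ) * x ^ (4 - j) * ω x ^ j

/-- The normalized error term `Ê(x;ω) = E(x;ω)/x²`. -/
def Ehat (ω : ℝ → ℝ) (x : ℝ) : ℝ := Eshell ω x / x ^ 2

/-- `σ(X;ω)`, the square root of the variance of `Ê(x;ω)` over `[X,2X]`. -/
def sigmaShell (ω : ℝ → ℝ) (X : ℝ) : ℝ :=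
  Real.sqrt ((1 / X) * ∫ x in X..(2 * X), Ehat ω x ^ 2)

/-- `M_j(X;ω) = (1/X)·∫_X^{2X} (ω(x)·log ω(x))^j dx`. -/
def Mom (j : ℕ) (X : ℝ) (ω : ℝ → ℝ) : ℝ :=
  (1 / X) * ∫ x in X..(2 * X), (ω x * Real.log (ω x)) ^ j

/-- `L_j(ω) = lim_{X→∞} M_j(X;ω)/M_2(X;ω)^{j/2}`. -/
def Llim (ω : ℝ → ℝ) (j : ℕ) : ℝ :=
  limUnder atTop fun X => Mom j X ω / Mom 2 X ω ^ (j / 2)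

/-- The Gaussian moment factor `j!/(2^{j/2}·(j/2)!)`. -/
def gaussMoment (j : ℕ) : ℝ :=
  (Nat.factorial j : ℝ) / (2 ^ (j / 2) * (Nat.factorial (j / 2) : ℝ))

/-- The regularity class `Ω` of gap width functions. -/
structure OmegaClass (ω : ℝ → ℝ) : Prop where
  contDiff : ContDiffOn ℝ 2 ω (Set.Ioi 0)
  pos : ∀ x, 0 < x → 0 < ω x
  tendsto_zero : Tendsto ω atTop (nhds 0)
  deriv_small : ∀ᶠ x in atTop, |deriv ω x| < 1 / 2
  zeros_bound : ∃ C > (0 : ℝ), ∃ ξ > (0 : ℝ), ∀ᶠ X in atTop,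
    {x ∈ Set.Icc X (2 * X) | deriv ω x = 0}.Finite ∧
    {x ∈ Set.Icc X (2 * X) | deriv (deriv ω) x = 0}.Finite ∧
    ({x ∈ Set.Icc X (2 * X) | deriv ω x = 0}.ncard : ℝ) *
        sSup (ω '' Set.Icc X (2 * X)) ≤ C * X ^ ((1 : ℝ) / 2) ∧
    ({x ∈ Set.Icc X (2 * X) | deriv (deriv ω) x = 0}.ncard : ℝ) ≤ C * X ^ (1 - ξ)
  mom2_lower : ∀ α > (0 : ℝ), ∃ c > (0 : ℝ), ∀ᶠ X in atTop, c * X ^ (-α) ≤ Mom 2 X ω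
  Llim_exists : ∀ j : ℕ, Even j →
    Tendsto (fun X => Mom j X ω / Mom 2 X ω ^ (j / 2)) atTop (nhds (Llim ω j))
  carleman : Tendsto (fun n => ∑ k ∈ Finset.range n,
      (gaussMoment (2 * (k + 1)) * Llim ω (2 * (k + 1))) ^
        ((-1 : ℝ) / (2 * ((k : ℝ) + 1)))) atTop atTop

/-- `r₂(m)`: the number of representations of `m` as a sum of two integer squares. -/
def r2 (m : ℕ) : ℕ := Set.ncard {p : ℤ × ℤ | p.1 ^ 2 + p.2 ^ 2 = (m : ℤ)}

/-- The sawtooth function `ψ(t) = t − ⌊t⌋ − 1/2`. -/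
def sawtooth (t : ℝ) : ℝ := t - ⌊t⌋ - 1 / 2

/-- The sawtooth sum `Ξ_ψ(x;ω)`. -/
def XiPsi (ω : ℝ → ℝ) (x : ℝ) : ℝ :=
  (∑ m ∈ Finset.Icc 1 ⌊(x + ω x) ^ 2⌋₊,
      (r2 m : ℝ) * sawtooth (Real.sqrt ((x + ω x) ^ 4 - (m : ℝ) ^ 2)))
    - ∑ m ∈ Finset.Icc 1 ⌊x ^ 2⌋₊, (r2 m : ℝ) * sawtooth (Real.sqrt (x ^ 4 - (m : ℝ) ^ 2))

/-!
After the substitution `N = x²` and its perturbation `N = (x + ω(x))²`, both monotone changes of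
variables, it suffices to bound the mean square of `S(N) = ∑_{m ≤ N} r₂(m) ψ(√(N² - m²))` over
`0 < N ≤ M`. Truncate the Fourier series of `ψ` after `M` terms. The remainder has mean square at
most `1/M`, so that Cauchy–Schwarz over `m` loses nothing. For each frequency `k`, adding the
corresponding cosine sum completes the square, and only the phases `√(N² - m²) - √(N² - n²)`
remain; for `m ≠ n` van der Corput's first-derivative test bounds their integrals by
`M² / (k |m² - n²|)`. The diagonal terms contribute `M² ∑ r₂(m)² / m ≪ M² log² M`, and a
Hilbert-type inequality bounds the others by the same quantity times `log M / k`. Cauchy–Schwarz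
over `k` with weights `1/k` then costs two further logarithms.
-/

/-! ### Harmonic sums and a Hilbert-type inequality -/

lemma sum_inv_le_one_add_log (M : ℕ) :
    ∑ k ∈ Finset.Icc 1 M, (k : ℝ)⁻¹ ≤ 1 + log M := by
  have h := harmonic_le_one_add_log M
  rw [harmonic_eq_sum_Icc] at h
  push_cast at h
  exact h

lemma sum_div_le_sum_div {b : ℕ → ℝ} {M : ℕ}
    (hb : ∀ n ≤ M, 0 ≤ ∑ m ∈ Finset.Icc 1 n, b m) :
    (∑ m ∈ Finset.Icc 1 M, b m) / (M + 1) ≤ ∑ m ∈ Finset.Icc 1 M, b m / m := by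
  induction M with
  | zero => simp
  | succ M ih =>
    calc (∑ m ∈ Finset.Icc 1 (M + 1), b m) / ((M + 1 : ℕ) + 1)
        ≤ (∑ m ∈ Finset.Icc 1 (M + 1), b m) / ((M + 1 : ℕ) : ℝ) :=
          div_le_div_of_nonneg_left (hb _ le_rfl) (by positivity) (by linarith)
      _ = (∑ m ∈ Finset.Icc 1 M, b m) / (M + 1) + b (M + 1) / (M + 1 : ℕ) := by
          rw [Finset.sum_Icc_succ_top (by lia), add_div, Nat.cast_succ]
      _ ≤ ∑ m ∈ Finset.Icc 1 (M + 1), b m / m := by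
          rw [Finset.sum_Icc_succ_top (by lia)]
          gcongr
          exact ih fun n hn => hb n (by lia)

lemma sum_div_le_mul_one_add_log {a : ℕ → ℝ} {C : ℝ} {M : ℕ} (hC : 0 ≤ C)
    (ha : ∀ n ≤ M, ∑ m ∈ Finset.Icc 1 n, a m ≤ C * n) :
    ∑ m ∈ Finset.Icc 1 M, a m / m ≤ C * (1 + log M) := by
  have hpartial : ∀ n ≤ M, 0 ≤ ∑ m ∈ Finset.Icc 1 n, (C - a m) := fun n hn => by
    simpa [mul_comm] using ha n hn
  have habel : 0 ≤ ∑ m ∈ Finset.Icc 1 M, (C - a m) / m :=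
    (div_nonneg (hpartial M le_rfl) (by positivity)).trans (sum_div_le_sum_div hpartial)
  calc ∑ m ∈ Finset.Icc 1 M, a m / m
      ≤ C * ∑ m ∈ Finset.Icc 1 M, (m : ℝ)⁻¹ := by
        simpa only [sub_div, Finset.sum_sub_distrib, sub_nonneg, div_eq_mul_inv C,
          ← Finset.mul_sum] using habel
    _ ≤ C * (1 + log M) := by
        gcongr
        exact sum_inv_le_one_add_log M

lemma sum_inv_abs_sub_le {M n : ℕ} (hn : n ∈ Finset.Icc 1 M) :
    ∑ m ∈ Finset.Icc 1 M, |(n : ℝ) - m|⁻¹ ≤ 2 * (1 + log M) := by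
  obtain ⟨hn1, hnM⟩ := Finset.mem_Icc.1 hn
  have hharm (s : Finset ℕ) (hs : s ⊆ Finset.Icc 1 M) :
      ∑ k ∈ s, (k : ℝ)⁻¹ ≤ 1 + log M :=
    (Finset.sum_le_sum_of_subset_of_nonneg hs fun _ _ _ => by positivity).trans
      (sum_inv_le_one_add_log M)
  have hbelow : ∑ m ∈ Finset.Ico 1 n, |(n : ℝ) - m|⁻¹ = ∑ k ∈ Finset.Ico 1 n, (k : ℝ)⁻¹ := by
    refine Finset.sum_nbij' (n - ·) (n - ·) (by grind) (by grind) (by grind) (by grind)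
      fun m hm => ?_
    rw [← Nat.cast_sub (Finset.mem_Ico.1 hm).2.le, Nat.abs_cast]
  have habove : ∑ m ∈ Finset.Ioc n M, |(n : ℝ) - m|⁻¹ =
      ∑ k ∈ Finset.Icc 1 (M - n), (k : ℝ)⁻¹ := by
    refine Finset.sum_nbij' (· - n) (· + n) (by grind) (by grind) (by grind) (by grind)
      fun m hm => ?_
    rw [abs_sub_comm, ← Nat.cast_sub (Finset.mem_Ioc.1 hm).1.le, Nat.abs_cast]
  have hsplit : (Finset.Icc 1 M).erase n = Finset.Ico 1 n ∪ Finset.Ioc n M := by grind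
  rw [← Finset.sum_erase (Finset.Icc 1 M) (a := n) (by simp), hsplit,
    Finset.sum_union (by grind [Finset.disjoint_left]), hbelow, habove, two_mul]
  exact add_le_add (hharm _ (by grind)) (hharm _ (by grind))

lemma sum_sum_abs_mul_kernel_le {ι : Type*} (s : Finset ι) (a : ι → ℝ) {K : ι → ι → ℝ}
    (hK : ∀ i j, 0 ≤ K i j) (hsymm : ∀ i j, K i j = K j i) :
    ∑ i ∈ s, ∑ j ∈ s, |a i * a j| * K i j ≤ ∑ i ∈ s, a i ^ 2 * ∑ j ∈ s, K i j := by
  have hamgm (i j : ι) : |a i * a j| * K i j ≤ (a i ^ 2 * K i j + a j ^ 2 * K j i) / 2 := by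
    rw [hsymm j i, ← add_mul, mul_div_right_comm]
    refine mul_le_mul_of_nonneg_right ?_ (hK i j)
    rw [abs_mul, ← sq_abs (a i), ← sq_abs (a j)]
    linarith [two_mul_le_add_sq |a i| |a j|]
  calc ∑ i ∈ s, ∑ j ∈ s, |a i * a j| * K i j
      ≤ ∑ i ∈ s, ∑ j ∈ s, (a i ^ 2 * K i j + a j ^ 2 * K j i) / 2 := by
        gcongr with i _ j _
        exact hamgm i j
    _ = ∑ i ∈ s, ∑ j ∈ s, a i ^ 2 * K i j := by
        simp only [← Finset.sum_div, Finset.sum_add_distrib]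
        rw [Finset.sum_comm (f := fun i j => a j ^ 2 * K j i), add_self_div_two]
    _ = ∑ i ∈ s, a i ^ 2 * ∑ j ∈ s, K i j := by simp only [Finset.mul_sum]

lemma sum_sum_abs_mul_inv_sq_sub_sq_le (a : ℕ → ℝ) (M : ℕ) :
    ∑ m ∈ Finset.Icc 1 M, ∑ n ∈ Finset.Icc 1 M, |a m * a n| * |(m : ℝ) ^ 2 - (n : ℝ) ^ 2|⁻¹ ≤
      2 * (1 + log M) * ∑ m ∈ Finset.Icc 1 M, a m ^ 2 / m := by
  have hkernel (m n : ℕ) (hm : m ∈ Finset.Icc 1 M) :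
      |(m : ℝ) ^ 2 - (n : ℝ) ^ 2|⁻¹ ≤ (m : ℝ)⁻¹ * |(m : ℝ) - n|⁻¹ := by
    have hm0 : (0 : ℝ) < m := by exact_mod_cast (Finset.mem_Icc.1 hm).1
    rw [sq_sub_sq, abs_mul, mul_inv, abs_of_nonneg (by positivity)]
    gcongr
    simp
  calc _ ≤ ∑ m ∈ Finset.Icc 1 M, a m ^ 2 * ∑ n ∈ Finset.Icc 1 M, |(m : ℝ) ^ 2 - (n : ℝ) ^ 2|⁻¹ :=
        sum_sum_abs_mul_kernel_le _ a (fun _ _ => by positivity)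
          fun m n => by rw [abs_sub_comm]
    _ ≤ ∑ m ∈ Finset.Icc 1 M, a m ^ 2 * ((m : ℝ)⁻¹ * (2 * (1 + log M))) := by
        gcongr with m hm
        calc _ ≤ ∑ n ∈ Finset.Icc 1 M, (m : ℝ)⁻¹ * |(m : ℝ) - n|⁻¹ :=
              Finset.sum_le_sum fun n _ => hkernel m n hm
          _ ≤ (m : ℝ)⁻¹ * (2 * (1 + log M)) := by
              rw [← Finset.mul_sum]
              gcongr
              exact sum_inv_abs_sub_le hm
    _ = 2 * (1 + log M) * ∑ m ∈ Finset.Icc 1 M, a m ^ 2 / m := by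
        rw [Finset.mul_sum]
        exact Finset.sum_congr rfl fun m _ => by ring

/-! ### The second moment of `r₂` -/

lemma exists_isCoprime_eq_mul (u w : ℤ) : ∃ p q s : ℤ, IsCoprime p q ∧ u = p * s ∧ w = q * s := by
  obtain ⟨p, q, hu, hw, hpq⟩ := extract_gcd u w
  exact ⟨p, q, gcd u w, (gcd_isUnit_iff p q).1 hpq, hu.trans (mul_comm _ _),
    hw.trans (mul_comm _ _)⟩

lemma exists_isCoprime_factorization {u v w z : ℤ} (h : u * v = w * z) :
    ∃ p q s t : ℤ, IsCoprime p q ∧ u = p * s ∧ w = q * s ∧ z = p * t ∧ v = q * t := by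
  obtain ⟨p, q, s, ⟨x, y, hxy⟩, rfl, rfl⟩ := exists_isCoprime_eq_mul u w
  rcases eq_or_ne s 0 with rfl | hs
  · obtain ⟨p', q', t, hpq', rfl, rfl⟩ := exists_isCoprime_eq_mul z v
    exact ⟨p', q', 0, t, hpq', by simp, by simp, rfl, rfl⟩
  · have hpv : p * v = q * z := mul_left_cancel₀ hs (by linear_combination h)
    refine ⟨p, q, s, x * z + y * v, ⟨x, y, hxy⟩, rfl, rfl, ?_, ?_⟩
    · linear_combination -z * hxy - y * hpv
    · linear_combination -v * hxy + x * hpv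

/-- The integer points `(u, v, w, z)` of the quadric `uv = wz` with all coordinates at most `D` in
absolute value. -/
def quadricPoints (D : ℕ) : Finset (ℤ × ℤ × ℤ × ℤ) :=
  (Finset.Icc (-D : ℤ) D ×ˢ Finset.Icc (-D : ℤ) D ×ˢ Finset.Icc (-D : ℤ) D ×ˢ
    Finset.Icc (-D : ℤ) D).filter fun x => x.1 * x.2.1 = x.2.2.1 * x.2.2.2

lemma mem_quadricPoints {D : ℕ} {u v w z : ℤ} : (u, v, w, z) ∈ quadricPoints D ↔
    (u.natAbs ≤ D ∧ v.natAbs ≤ D ∧ w.natAbs ≤ D ∧ z.natAbs ≤ D) ∧ u * v = w * z := by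
  simp only [quadricPoints, Finset.mem_filter, Finset.mem_product, Finset.mem_Icc, ← abs_le,
    Int.abs_eq_natAbs, Nat.cast_le]

lemma exists_mem_box_factorization {D : ℕ} (hD : 1 ≤ D) {u v w z : ℤ}
    (hx : (u, v, w, z) ∈ quadricPoints D) :
    ∃ P ∈ Finset.Icc 1 D, ∃ p q s t : ℤ, (p, q) ∈ Finset.box P ∧ s.natAbs ≤ D / P ∧
      t.natAbs ≤ D / P ∧ u = p * s ∧ w = q * s ∧ z = p * t ∧ v = q * t := by
  obtain ⟨⟨hu, hv, hw, hz⟩, h⟩ := mem_quadricPoints.1 hx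
  obtain ⟨p, q, s, t, hpq, rfl, rfl, rfl, rfl⟩ := exists_isCoprime_factorization h
  rw [Int.natAbs_mul] at hu hv hw hz
  by_cases hst : s = 0 ∧ t = 0
  · obtain ⟨rfl, rfl⟩ := hst
    exact ⟨1, by simpa, 1, 0, 0, 0, by simp [Int.mem_box], by simp⟩
  · have hs : max p.natAbs q.natAbs * s.natAbs ≤ D := by grind
    have ht : max p.natAbs q.natAbs * t.natAbs ≤ D := by grind
    have hpos : 0 < max p.natAbs q.natAbs := by
      have := hpq.ne_zero_or_ne_zero
      lia
    have hle : max p.natAbs q.natAbs ≤ D := by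
      rcases not_and_or.1 hst with hs0 | ht0
      · exact (Nat.le_mul_of_pos_right _ (Int.natAbs_pos.2 hs0)).trans hs
      · exact (Nat.le_mul_of_pos_right _ (Int.natAbs_pos.2 ht0)).trans ht
    exact ⟨_, Finset.mem_Icc.2 ⟨hpos, hle⟩, p, q, s, t, Int.mem_box.2 rfl,
      (Nat.le_div_iff_mul_le hpos).2 (by lia), (Nat.le_div_iff_mul_le hpos).2 (by lia),
      rfl, rfl, rfl, rfl⟩

lemma card_quadricPoints_le_sum {D : ℕ} (hD : 1 ≤ D) :
    (quadricPoints D).card ≤ ∑ P ∈ Finset.Icc 1 D, 8 * P * (2 * (D / P) + 1) ^ 2 := by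
  let I (P : ℕ) : Finset ℤ := Finset.Icc (-(D / P : ℕ)) (D / P : ℕ)
  have hcard (P : ℕ) : (I P).card = 2 * (D / P) + 1 := by
    rw [Int.card_Icc]; lia
  let T : Finset ((_ : ℕ) × (ℤ × ℤ) × ℤ × ℤ) :=
    (Finset.Icc 1 D).sigma fun P => Finset.box P ×ˢ I P ×ˢ I P
  have hcover : Set.SurjOn (fun x : (_ : ℕ) × (ℤ × ℤ) × ℤ × ℤ =>
      (x.2.1.1 * x.2.2.1, x.2.1.2 * x.2.2.2, x.2.1.2 * x.2.2.1, x.2.1.1 * x.2.2.2))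
      T (quadricPoints D) := by
    rintro ⟨u, v, w, z⟩ hx
    obtain ⟨P, hP, p, q, s, t, hpq, hs, ht, rfl, rfl, rfl, rfl⟩ :=
      exists_mem_box_factorization hD hx
    refine ⟨⟨P, (p, q), s, t⟩, ?_, rfl⟩
    simp only [Finset.mem_coe, T, Finset.mem_sigma, Finset.mem_product, I, Finset.mem_Icc]
    exact ⟨Finset.mem_Icc.1 hP, hpq, by lia, by lia⟩
  refine (Finset.card_le_card_of_surjOn _ hcover).trans_eq ?_
  rw [Finset.card_sigma]
  refine Finset.sum_congr rfl fun P hP => ?_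
  rw [Finset.card_product, Finset.card_product, hcard, ← sq,
    Int.card_box (Nat.one_le_iff_ne_zero.1 (Finset.mem_Icc.1 hP).1)]

lemma card_quadricPoints_le {D : ℕ} (hD : 1 ≤ D) :
    ((quadricPoints D).card : ℝ) ≤ 72 * D ^ 2 * (1 + log D) := by
  have hterm (P : ℕ) (hP : P ∈ Finset.Icc 1 D) :
      8 * P * (2 * (D / P : ℕ) + 1 : ℝ) ^ 2 ≤ 72 * D ^ 2 * (P : ℝ)⁻¹ := by
    obtain ⟨hP1, hPD⟩ := Finset.mem_Icc.1 hP
    have hP0 : (0 : ℝ) < P := by exact_mod_cast hP1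
    have hone : (1 : ℝ) ≤ D / P := (one_le_div hP0).2 (by exact_mod_cast hPD)
    calc 8 * P * (2 * (D / P : ℕ) + 1 : ℝ) ^ 2 ≤ 8 * P * (2 * (D / P : ℝ) + D / P) ^ 2 := by
          gcongr
          exact Nat.cast_div_le
      _ = 72 * D ^ 2 * (P : ℝ)⁻¹ := by field
  calc ((quadricPoints D).card : ℝ)
      ≤ ∑ P ∈ Finset.Icc 1 D, 8 * P * (2 * (D / P : ℕ) + 1 : ℝ) ^ 2 := by
        exact_mod_cast card_quadricPoints_le_sum hD
    _ ≤ ∑ P ∈ Finset.Icc 1 D, 72 * D ^ 2 * (P : ℝ)⁻¹ := Finset.sum_le_sum hterm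
    _ ≤ 72 * D ^ 2 * (1 + log D) := by
        rw [← Finset.mul_sum]
        gcongr
        exact sum_inv_le_one_add_log D

/-- The pairs `(a, b)` of integers with `a² + b² = m`. -/
def sqReps (m : ℕ) : Finset (ℤ × ℤ) :=
  (Finset.Icc (-m.sqrt : ℤ) m.sqrt ×ˢ Finset.Icc (-m.sqrt : ℤ) m.sqrt).filter
    fun p => p.1 ^ 2 + p.2 ^ 2 = m

lemma natAbs_le_sqrt_of_sq_add_sq_eq {a b : ℤ} {m : ℕ} (h : a ^ 2 + b ^ 2 = m) :
    a.natAbs ≤ m.sqrt := by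
  rw [Nat.le_sqrt']
  zify
  rw [sq_abs]
  linarith [sq_nonneg b]

lemma mem_sqReps {a b : ℤ} {m : ℕ} : (a, b) ∈ sqReps m ↔ a ^ 2 + b ^ 2 = m := by
  simp only [sqReps, Finset.mem_filter, Finset.mem_product, Finset.mem_Icc, ← abs_le,
    Int.abs_eq_natAbs, Nat.cast_le, and_iff_right_iff_imp]
  exact fun h => ⟨natAbs_le_sqrt_of_sq_add_sq_eq h,
    natAbs_le_sqrt_of_sq_add_sq_eq ((add_comm _ _).trans h)⟩

lemma r2_eq_card_sqReps (m : ℕ) : r2 m = (sqReps m).card := by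
  rw [r2, ← Set.ncard_coe_finset]
  congr 1
  ext ⟨a, b⟩
  exact mem_sqReps.symm

-- `a² + b² = c² + d²` factors as `(a - c)(a + c) = (d - b)(d + b)`.
lemma sum_r2_sq_le_card_quadricPoints (N : ℕ) :
    ∑ m ∈ Finset.Icc 1 N, r2 m ^ 2 ≤ (quadricPoints (2 * N.sqrt)).card := by
  have hcard : ∑ m ∈ Finset.Icc 1 N, r2 m ^ 2 =
      ((Finset.Icc 1 N).sigma fun m => sqReps m ×ˢ sqReps m).card := by
    simp only [Finset.card_sigma, Finset.card_product, r2_eq_card_sqReps, sq]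
  rw [hcard]
  refine Finset.card_le_card_of_injOn (fun x => (x.2.1.1 - x.2.2.1, x.2.1.1 + x.2.2.1,
    x.2.2.2 - x.2.1.2, x.2.2.2 + x.2.1.2)) ?_ ?_
  · rintro ⟨m, ⟨a, b⟩, ⟨c, d⟩⟩ hx
    simp only [Finset.coe_sigma, Set.mem_sigma_iff, Finset.mem_coe, Finset.mem_product,
      Finset.mem_Icc, mem_sqReps] at hx
    obtain ⟨⟨-, hmN⟩, hab, hcd⟩ := hx
    have hsqrt := Nat.sqrt_le_sqrt hmN
    have ha := natAbs_le_sqrt_of_sq_add_sq_eq hab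
    have hb := natAbs_le_sqrt_of_sq_add_sq_eq ((add_comm _ _).trans hab)
    have hc := natAbs_le_sqrt_of_sq_add_sq_eq hcd
    have hd := natAbs_le_sqrt_of_sq_add_sq_eq ((add_comm _ _).trans hcd)
    exact mem_quadricPoints.2 ⟨by lia, by linear_combination hab - hcd⟩
  · rintro ⟨m, ⟨a, b⟩, ⟨c, d⟩⟩ hx ⟨m', ⟨a', b'⟩, ⟨c', d'⟩⟩ hx' h
    simp only [Finset.coe_sigma, Set.mem_sigma_iff, Finset.mem_coe, Finset.mem_product,
      mem_sqReps] at hx hx'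
    simp only [Prod.mk.injEq] at h
    obtain ⟨rfl, rfl, rfl, rfl⟩ : a = a' ∧ b = b' ∧ c = c' ∧ d = d' := by lia
    obtain rfl : m = m' := by exact_mod_cast hx.2.1.symm.trans hx'.2.1
    rfl

lemma sum_r2_sq_le (N : ℕ) :
    ∑ m ∈ Finset.Icc 1 N, (r2 m : ℝ) ^ 2 ≤ 500 * (1 + log N) * N := by
  rcases Nat.eq_zero_or_pos N with rfl | hN
  · simp
  have hN1 : (1 : ℝ) ≤ N := by exact_mod_cast hN
  have hsq : (N.sqrt : ℝ) ^ 2 ≤ N := by exact_mod_cast N.sqrt_le'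
  have hlog : log (2 * N.sqrt : ℕ) ≤ 0.7 + log N := by
    have hsqrt : 0 < N.sqrt := Nat.sqrt_pos.2 hN
    have : log N.sqrt ≤ log N := log_le_log (by positivity) (by exact_mod_cast N.sqrt_le_self)
    rw [Nat.cast_mul, log_mul (by norm_num) (by positivity)]
    linarith [log_two_lt_d9]
  calc ∑ m ∈ Finset.Icc 1 N, (r2 m : ℝ) ^ 2 ≤ (quadricPoints (2 * N.sqrt)).card := by
        exact_mod_cast sum_r2_sq_le_card_quadricPoints N
    _ ≤ 72 * (2 * N.sqrt : ℕ) ^ 2 * (1 + log (2 * N.sqrt : ℕ)) :=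
        card_quadricPoints_le (by have := Nat.sqrt_pos.2 hN; lia)
    _ = 288 * (N.sqrt : ℝ) ^ 2 * (1 + log (2 * N.sqrt : ℕ)) := by push_cast; ring
    _ ≤ 288 * N * (1.7 + log N) := by
        gcongr 288 * ?_ * ?_
        linarith
    _ ≤ 500 * (1 + log N) * N := by nlinarith [log_nonneg hN1]

lemma sum_r2_sq_div_le (M : ℕ) :
    ∑ m ∈ Finset.Icc 1 M, (r2 m : ℝ) ^ 2 / m ≤ 500 * (1 + log M) ^ 2 := by
  rw [sq (1 + log _), ← mul_assoc]
  refine sum_div_le_mul_one_add_log (by positivity) fun n hn => (sum_r2_sq_le n).trans ?_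
  rcases Nat.eq_zero_or_pos n with rfl | hn0
  · simp
  · gcongr

/-! ### Oscillatory integrals -/

lemma abs_sub_le_sub_of_abs_deriv_le {a b : ℝ} {F F' h h' : ℝ → ℝ} (hab : a ≤ b)
    (hF : ContinuousOn F (Set.Icc a b)) (hh : ContinuousOn h (Set.Icc a b))
    (hF' : ∀ x ∈ Set.Ioo a b, HasDerivAt F (F' x) x)
    (hh' : ∀ x ∈ Set.Ioo a b, HasDerivAt h (h' x) x)
    (hle : ∀ x ∈ Set.Ioo a b, |F' x| ≤ h' x) :
    |F b - F a| ≤ h b - h a := by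
  have hadd : MonotoneOn (h + F) (Set.Icc a b) := by
    refine monotoneOn_of_hasDerivWithinAt_nonneg (f' := h' + F') (convex_Icc a b) (hh.add hF)
      (fun x hx => ?_) fun x hx => ?_ <;> rw [interior_Icc] at hx
    · exact ((hh' x hx).add (hF' x hx)).hasDerivWithinAt
    · exact neg_le_iff_add_nonneg'.1 (neg_le_of_abs_le (hle x hx))
  have hsub : MonotoneOn (h - F) (Set.Icc a b) := by
    refine monotoneOn_of_hasDerivWithinAt_nonneg (f' := h' - F') (convex_Icc a b) (hh.sub hF)
      (fun x hx => ?_) fun x hx => ?_ <;> rw [interior_Icc] at hx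
    · exact ((hh' x hx).sub (hF' x hx)).hasDerivWithinAt
    · exact sub_nonneg.2 (le_of_abs_le (hle x hx))
  have ha := Set.left_mem_Icc.2 hab
  have hb := Set.right_mem_Icc.2 hab
  have h₁ := hadd ha hb hab
  have h₂ := hsub ha hb hab
  simp only [Pi.add_apply, Pi.sub_apply] at h₁ h₂
  exact abs_le.2 ⟨by linarith, by linarith⟩

-- Van der Corput's first derivative test, with `h = 1 / φ'` allowed to vanish at the endpoints:
-- `cos φ = (h * sin φ)' - h' * sin φ`.
lemma abs_integral_cos_le {a b : ℝ} {h h' φ φ' : ℝ → ℝ} (hab : a ≤ b)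
    (hh : ContinuousOn h (Set.Icc a b)) (hφ : ContinuousOn φ (Set.Icc a b))
    (hh' : ∀ x ∈ Set.Ioo a b, HasDerivAt h (h' x) x)
    (hφ' : ∀ x ∈ Set.Ioo a b, HasDerivAt φ (φ' x) x)
    (hmono : ∀ x ∈ Set.Ioo a b, 0 ≤ h' x) (hmul : ∀ x ∈ Set.Ioo a b, h x * φ' x = 1)
    (ha : 0 ≤ h a) :
    |∫ x in a..b, cos (φ x)| ≤ 2 * h b := by
  have hcos : ContinuousOn (fun x => cos (φ x)) (Set.Icc a b) := continuous_cos.comp_continuousOn hφ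
  have hint : IntegrableOn (fun x => cos (φ x)) (Set.Icc a b) := hcos.integrableOn_Icc
  let G (x : ℝ) : ℝ := (∫ t in a..x, cos (φ t)) - h x * sin (φ x)
  have hG : ContinuousOn G (Set.Icc a b) := by
    refine .sub ?_ (hh.mul (continuous_sin.comp_continuousOn hφ))
    rw [← Set.uIcc_of_le hab] at hint ⊢
    exact intervalIntegral.continuousOn_primitive_interval hint
  have hG' (x) (hx : x ∈ Set.Ioo a b) : HasDerivAt G (-(h' x * sin (φ x))) x := by
    have hJ : HasDerivAt (fun y => ∫ t in a..y, cos (φ t)) (cos (φ x)) x :=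
      intervalIntegral.integral_hasDerivAt_right
        ((intervalIntegrable_iff_integrableOn_Icc_of_le hx.1.le).2
          (hint.mono_set (Set.Icc_subset_Icc_right hx.2.le)))
        ((hcos.mono Set.Ioo_subset_Icc_self).stronglyMeasurableAtFilter isOpen_Ioo x hx)
        (hcos.continuousAt (Icc_mem_nhds hx.1 hx.2))
    refine (hJ.sub ((hh' x hx).mul (hφ' x hx).sin)).congr_deriv ?_
    linear_combination -cos (φ x) * hmul x hx
  have hle := abs_sub_le_sub_of_abs_deriv_le hab hG hh hG' hh' fun x hx => by
    rw [abs_neg, abs_mul, abs_of_nonneg (hmono x hx)]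
    exact mul_le_of_le_one_right (hmono x hx) (abs_sin_le_one _)
  have hhab : 0 ≤ h b - h a := (abs_nonneg _).trans hle
  have hbd (x) (hx : 0 ≤ h x) : |h x * sin (φ x)| ≤ h x := by
    rw [abs_mul, abs_of_nonneg hx]
    exact mul_le_of_le_one_right hx (abs_sin_le_one _)
  calc |∫ x in a..b, cos (φ x)| = |(G b - G a) + h b * sin (φ b) - h a * sin (φ a)| := by
        simp only [G, intervalIntegral.integral_same]
        ring_nf
    _ ≤ |G b - G a| + |h b * sin (φ b)| + |h a * sin (φ a)| :=
        (abs_sub _ _).trans (by gcongr; exact abs_add_le _ _)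
    _ ≤ (h b - h a) + h b + h a := by
        gcongr
        · exact hbd b (by linarith)
        · exact hbd a ha
    _ = 2 * h b := by ring

lemma hasDerivAt_sqrt_sq_sub_sq {m x : ℝ} (h : 0 < x ^ 2 - m ^ 2) :
    HasDerivAt (fun y => √(y ^ 2 - m ^ 2)) (x / √(x ^ 2 - m ^ 2)) x := by
  convert ((hasDerivAt_pow 2 x).sub_const (m ^ 2)).sqrt h.ne' using 1
  field

lemma sqrt_sq_sub_sq_le {x : ℝ} (hx : 0 ≤ x) (m : ℝ) : √(x ^ 2 - m ^ 2) ≤ x :=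
  (sqrt_le_sqrt (sub_le_self _ (sq_nonneg m))).trans_eq (sqrt_sq hx)

lemma hasDerivAt_inv_deriv_sqrt_sub_sqrt {m n x e : ℝ} (hx : 0 < x) (hm : 0 < x ^ 2 - m ^ 2)
    (hn : 0 < x ^ 2 - n ^ 2) :
    HasDerivAt (fun y => √(y ^ 2 - m ^ 2) * √(y ^ 2 - n ^ 2) / y *
      (√(y ^ 2 - m ^ 2) + √(y ^ 2 - n ^ 2)) / e)
      (((√(x ^ 2 - n ^ 2) / √(x ^ 2 - m ^ 2)
          + √(x ^ 2 - m ^ 2) * n ^ 2 / (√(x ^ 2 - n ^ 2) * x ^ 2))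
        * (√(x ^ 2 - m ^ 2) + √(x ^ 2 - n ^ 2))
        + √(x ^ 2 - m ^ 2) * √(x ^ 2 - n ^ 2) / x
          * (x / √(x ^ 2 - m ^ 2) + x / √(x ^ 2 - n ^ 2))) / e) x := by
  have hA := hasDerivAt_sqrt_sq_sub_sq hm
  have hB := hasDerivAt_sqrt_sq_sub_sq hn
  have hA0 := sqrt_pos.2 hm
  have hB0 := sqrt_pos.2 hn
  have hBsq := sq_sqrt hn.le
  refine ((((hA.mul hB).div (hasDerivAt_id x) hx.ne').mul (hA.add hB)).div_const e).congr_deriv ?_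
  simp only [Pi.mul_apply, Pi.add_apply, Pi.div_apply, id]
  congr 3
  field_simp
  linear_combination -√(x ^ 2 - m ^ 2) ^ 2 * hBsq

lemma abs_integral_cos_sqrt_sub_sqrt_le {m n c a b : ℝ} (hm : 0 ≤ m) (hmn : m < n) (hc : 0 < c)
    (hna : n ≤ a) (hab : a ≤ b) :
    |∫ x in a..b, cos (c * (√(x ^ 2 - m ^ 2) - √(x ^ 2 - n ^ 2)))| ≤
      4 * b ^ 2 / (c * (n ^ 2 - m ^ 2)) := by
  have he : 0 < c * (n ^ 2 - m ^ 2) := mul_pos hc (by nlinarith)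
  have ha : 0 < a := by linarith
  have hb : 0 < b := by linarith
  have hpos (x) (hx : x ∈ Set.Ioo a b) : 0 < x ∧ 0 < x ^ 2 - m ^ 2 ∧ 0 < x ^ 2 - n ^ 2 :=
    ⟨by linarith [hx.1], by nlinarith [hx.1], by nlinarith [hx.1]⟩
  simp_rw [← cos_neg (c * (√_ - √_)), ← mul_neg, neg_sub]
  refine (abs_integral_cos_le (φ' := fun x => c * (x / √(x ^ 2 - n ^ 2) - x / √(x ^ 2 - m ^ 2)))
    hab ?_ (by fun_prop) (fun x hx => hasDerivAt_inv_deriv_sqrt_sub_sqrt (e := c * (n ^ 2 - m ^ 2))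
      (hpos x hx).1 (hpos x hx).2.1 (hpos x hx).2.2)
    (fun x hx => ((hasDerivAt_sqrt_sq_sub_sq (hpos x hx).2.2).sub
      (hasDerivAt_sqrt_sq_sub_sq (hpos x hx).2.1)).const_mul c)
    (fun x hx => ?_) (fun x hx => ?_) (by positivity)).trans ?_
  · have (x) (hx : x ∈ Set.Icc a b) : x ≠ 0 := by linarith [hx.1]
    fun_prop (disch := assumption)
  · have := (hpos x hx).1
    positivity
  · obtain ⟨hx, hxm, hxn⟩ := hpos x hx
    have hA0 := sqrt_pos.2 hxm
    have hB0 := sqrt_pos.2 hxn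
    have hAsq := sq_sqrt hxm.le
    have hBsq := sq_sqrt hxn.le
    have : n ^ 2 - m ^ 2 ≠ 0 := by nlinarith
    field_simp
    linear_combination hAsq - hBsq
  · have hA := sqrt_sq_sub_sq_le hb.le m
    have hB := sqrt_sq_sub_sq_le hb.le n
    calc 2 * (√(b ^ 2 - m ^ 2) * √(b ^ 2 - n ^ 2) / b *
          (√(b ^ 2 - m ^ 2) + √(b ^ 2 - n ^ 2)) / (c * (n ^ 2 - m ^ 2)))
        ≤ 2 * (b * b / b * (b + b) / (c * (n ^ 2 - m ^ 2))) := by gcongr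
      _ = 4 * b ^ 2 / (c * (n ^ 2 - m ^ 2)) := by field

/-! ### Monotone changes of variables -/

section ChangeOfVariables

variable {f g : ℝ → ℝ} {s t : Set ℝ} {c : ℝ}

lemma hasDerivAt_of_le_deriv (hc : 0 < c) (hg' : ∀ x ∈ s, c ≤ deriv g x) :
    ∀ x ∈ s, HasDerivAt g (deriv g x) x := fun x hx =>
  (differentiableAt_of_deriv_ne_zero (hc.trans_le (hg' x hx)).ne').hasDerivAt

lemma injOn_of_le_deriv (hs : IsOpen s) (hconv : Convex ℝ s) (hc : 0 < c)
    (hg' : ∀ x ∈ s, c ≤ deriv g x) : Set.InjOn g s :=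
  (strictMonoOn_of_deriv_pos hconv
    (fun x hx => (hasDerivAt_of_le_deriv hc hg' x hx).continuousAt.continuousWithinAt)
    fun x hx => hc.trans_le (hg' x (hs.interior_eq ▸ hx))).injOn

lemma integrableOn_abs_deriv_mul_comp (hs : IsOpen s) (hconv : Convex ℝ s) (hc : 0 < c)
    (hg' : ∀ x ∈ s, c ≤ deriv g x) (hst : Set.MapsTo g s t) (hf : IntegrableOn f t) :
    IntegrableOn (fun x => |deriv g x| * f (g x)) s :=
  (integrableOn_image_iff_integrableOn_abs_deriv_smul hs.measurableSet
    (fun x hx => (hasDerivAt_of_le_deriv hc hg' x hx).hasDerivWithinAt)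
    (injOn_of_le_deriv hs hconv hc hg') f).1 (hf.mono_set hst.image_subset)

lemma integrableOn_comp_of_le_deriv (hs : IsOpen s) (hconv : Convex ℝ s) (hc : 0 < c)
    (hg' : ∀ x ∈ s, c ≤ deriv g x) (hst : Set.MapsTo g s t) (hf : IntegrableOn f t) :
    IntegrableOn (fun x => f (g x)) s := by
  have hinv : ∀ᵐ x ∂volume.restrict s, ‖|deriv g x|⁻¹‖ ≤ c⁻¹ :=
    ae_restrict_of_forall_mem hs.measurableSet fun x hx => by
      rw [norm_inv, norm_eq_abs, abs_abs]
      exact inv_anti₀ hc ((hg' x hx).trans (le_abs_self _))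
  refine ((integrableOn_abs_deriv_mul_comp hs hconv hc hg' hst hf).bdd_mul
    (measurable_deriv g).abs.inv.aestronglyMeasurable hinv).congr ?_
  refine ae_restrict_of_forall_mem hs.measurableSet fun x hx => ?_
  exact inv_mul_cancel_left₀ (abs_pos.2 (hc.trans_le (hg' x hx)).ne').ne' _

lemma mul_setIntegral_comp_le (hs : IsOpen s) (hconv : Convex ℝ s) (hc : 0 < c)
    (hg' : ∀ x ∈ s, c ≤ deriv g x) (hst : Set.MapsTo g s t) (hf : IntegrableOn f t)
    (hf0 : ∀ x, 0 ≤ f x) :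
    c * ∫ x in s, f (g x) ≤ ∫ y in t, f y :=
  calc c * ∫ x in s, f (g x) = ∫ x in s, c * f (g x) := (integral_const_mul _ _).symm
    _ ≤ ∫ x in s, |deriv g x| * f (g x) :=
        setIntegral_mono_on ((integrableOn_comp_of_le_deriv hs hconv hc hg' hst hf).const_mul c)
          (integrableOn_abs_deriv_mul_comp hs hconv hc hg' hst hf) hs.measurableSet fun x hx =>
            mul_le_mul_of_nonneg_right ((hg' x hx).trans (le_abs_self _)) (hf0 _)
    _ = ∫ y in g '' s, f y :=
        (integral_image_eq_integral_abs_deriv_smul hs.measurableSet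
          (fun x hx => (hasDerivAt_of_le_deriv hc hg' x hx).hasDerivWithinAt)
          (injOn_of_le_deriv hs hconv hc hg') f).symm
    _ ≤ ∫ y in t, f y :=
        setIntegral_mono_set hf (ae_of_all _ hf0) hst.image_subset.eventuallyLE

end ChangeOfVariables

/-! ### Sums of functions of `√(N² - m²)` -/

section LegSums

/-- The pullback of `f` along the leg `N ↦ √(N² - m²)` of a right triangle with hypotenuse `N`,
extended by zero to `N < m`. -/
def legPullback (m : ℝ) (f : ℝ → ℝ) : ℝ → ℝ :=
  (Set.Ici m).indicator fun N => f √(N ^ 2 - m ^ 2)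

/-- The weighted sum `∑ₘ aₘ f(√(N² - m²))` over `1 ≤ m ≤ M`, where the terms with `m > N` are
omitted. -/
def legSum (a : ℕ → ℝ) (M : ℕ) (f : ℝ → ℝ) (N : ℝ) : ℝ :=
  ∑ m ∈ Finset.Icc 1 M, a m * legPullback m f N

variable {f : ℝ → ℝ} {C T : ℝ}

lemma legPullback_sq (m : ℝ) (f : ℝ → ℝ) (N : ℝ) :
    legPullback m f N ^ 2 = legPullback m (fun t => f t ^ 2) N := by
  by_cases h : N ∈ Set.Ici m <;> simp [legPullback, h]

lemma memLp_legPullback (hf : Measurable f) (hC : ∀ t, |f t| ≤ C) (m T : ℝ) :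
    MemLp (legPullback m f) 2 (volume.restrict (Set.Ioc 0 T)) := by
  have hmeas : Measurable (legPullback m f) :=
    (hf.comp (by fun_prop)).indicator measurableSet_Ici
  refine MemLp.of_bound hmeas.aestronglyMeasurable C (ae_of_all _ fun N => ?_)
  exact (norm_indicator_le_norm_self _ _).trans (hC _)

lemma memLp_legSum (hf : Measurable f) (hC : ∀ t, |f t| ≤ C) (a : ℕ → ℝ) (M : ℕ) (T : ℝ) :
    MemLp (legSum a M f) 2 (volume.restrict (Set.Ioc 0 T)) :=
  memLp_finsetSum _ fun m _ => (memLp_legPullback hf hC m T).const_mul (a m)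

lemma setIntegral_Ioc_indicator_Ici {m : ℝ} (hm : 0 ≤ m) (F : ℝ → ℝ) (T : ℝ) :
    ∫ N in Set.Ioc 0 T, (Set.Ici m).indicator F N = ∫ N in Set.Ioo m T, F N := by
  have hae : (Set.Ioc 0 T ∩ Set.Ici m : Set ℝ) =ᵐ[volume] Set.Ioo m T := by
    refine ((ae_eq_refl _).inter Ioi_ae_eq_Ici.symm).trans ?_
    rw [Set.Ioc_inter_Ioi, max_eq_right hm]
    exact Ioo_ae_eq_Ioc.symm
  rw [setIntegral_indicator measurableSet_Ici, setIntegral_congr_set hae]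

lemma setIntegral_legPullback_le {m : ℝ} (hm : 0 ≤ m) (hf0 : ∀ t, 0 ≤ f t)
    (hf : IntegrableOn f (Set.Ioc 0 T)) :
    ∫ N in Set.Ioc 0 T, legPullback m f N ≤ ∫ t in Set.Ioc 0 T, f t := by
  have hpos (N) (hN : N ∈ Set.Ioo m T) : 0 < N ^ 2 - m ^ 2 := by nlinarith [hN.1]
  have hN0 (N) (hN : N ∈ Set.Ioo m T) : 0 ≤ N := hm.trans hN.1.le
  rw [legPullback, setIntegral_Ioc_indicator_Ici hm, ← one_mul (∫ N in Set.Ioo m T, _)]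
  refine mul_setIntegral_comp_le isOpen_Ioo (convex_Ioo m T) one_pos (fun N hN => ?_)
    (fun N hN => ?_) hf hf0
  · rw [(hasDerivAt_sqrt_sq_sub_sq (hpos N hN)).deriv, one_le_div (sqrt_pos.2 (hpos N hN))]
    exact sqrt_sq_sub_sq_le (hN0 N hN) m
  · exact ⟨sqrt_pos.2 (hpos N hN), (sqrt_sq_sub_sq_le (hN0 N hN) m).trans hN.2.le⟩

lemma setIntegral_legSum_sq_le (hf : Measurable f) (hC : ∀ t, |f t| ≤ C) (a : ℕ → ℝ) (M : ℕ)
    (T : ℝ) :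
    ∫ N in Set.Ioc 0 T, legSum a M f N ^ 2 ≤
      M * (∑ m ∈ Finset.Icc 1 M, a m ^ 2) * ∫ t in Set.Ioc 0 T, f t ^ 2 := by
  have hfsq : IntegrableOn (fun t => f t ^ 2) (Set.Ioc 0 T) :=
    (MemLp.of_bound hf.aestronglyMeasurable C (ae_of_all _ hC)).integrable_sq
  have hsq (m : ℕ) : IntegrableOn (fun N => a m ^ 2 * legPullback m f N ^ 2) (Set.Ioc 0 T) :=
    (memLp_legPullback hf hC m T).integrable_sq.const_mul _
  calc ∫ N in Set.Ioc 0 T, legSum a M f N ^ 2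
      ≤ ∫ N in Set.Ioc 0 T, M * ∑ m ∈ Finset.Icc 1 M, a m ^ 2 * legPullback m f N ^ 2 := by
        refine integral_mono (memLp_legSum hf hC a M T).integrable_sq
          ((integrable_finsetSum _ fun m _ => hsq m).const_mul _) fun N => ?_
        simpa only [legSum, mul_pow, Nat.card_Icc, Nat.add_sub_cancel] using
          sq_sum_le_card_mul_sum_sq (s := Finset.Icc 1 M) (f := fun m => a m * legPullback m f N)
    _ = M * ∑ m ∈ Finset.Icc 1 M, a m ^ 2 *
          ∫ N in Set.Ioc 0 T, legPullback m (fun t => f t ^ 2) N := by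
        rw [integral_const_mul, integral_finsetSum _ fun m _ => hsq m]
        simp only [integral_const_mul, legPullback_sq]
    _ ≤ M * ∑ m ∈ Finset.Icc 1 M, a m ^ 2 * ∫ t in Set.Ioc 0 T, f t ^ 2 := by
        refine mul_le_mul_of_nonneg_left (Finset.sum_le_sum fun m _ => ?_) M.cast_nonneg
        exact mul_le_mul_of_nonneg_left
          (setIntegral_legPullback_le m.cast_nonneg (fun t => sq_nonneg _) hfsq) (sq_nonneg _)
    _ = M * (∑ m ∈ Finset.Icc 1 M, a m ^ 2) * ∫ t in Set.Ioc 0 T, f t ^ 2 := by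
        rw [← Finset.sum_mul, mul_assoc]

lemma setIntegral_legSum_sq (hf : Measurable f) (hC : ∀ t, |f t| ≤ C) (a : ℕ → ℝ) (M : ℕ)
    (T : ℝ) :
    ∫ N in Set.Ioc 0 T, legSum a M f N ^ 2 = ∑ m ∈ Finset.Icc 1 M, ∑ n ∈ Finset.Icc 1 M,
      a m * a n * ∫ N in Set.Ioc 0 T, legPullback m f N * legPullback n f N := by
  have hint (m n : ℕ) : IntegrableOn
      (fun N => a m * a n * (legPullback m f N * legPullback n f N)) (Set.Ioc 0 T) :=
    ((memLp_legPullback hf hC m T).integrable_mul (memLp_legPullback hf hC n T)).const_mul _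
  simp only [legSum, sq, Finset.sum_mul_sum, mul_mul_mul_comm (a _)]
  rw [integral_finsetSum _ fun m _ => integrable_finsetSum _ fun n _ => hint m n]
  refine Finset.sum_congr rfl fun m _ => ?_
  rw [integral_finsetSum _ fun n _ => hint m n]
  simp only [integral_const_mul]

end LegSums

lemma legPullback_sin_mul_add_cos_mul (c m n N : ℝ) :
    legPullback m (fun t => sin (c * t)) N * legPullback n (fun t => sin (c * t)) N +
      legPullback m (fun t => cos (c * t)) N * legPullback n (fun t => cos (c * t)) N =
    (Set.Ici (max m n)).indicator
      (fun N => cos (c * (√(N ^ 2 - m ^ 2) - √(N ^ 2 - n ^ 2)))) N := by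
  rw [← Set.Ici_inter_Ici, ← Set.indicator_indicator]
  by_cases hm : N ∈ Set.Ici m <;> by_cases hn : N ∈ Set.Ici n
  · simp only [legPullback, Set.indicator_of_mem, hm, hn, mul_sub, cos_sub]
    ring
  all_goals simp [legPullback, hm, hn]

lemma abs_setIntegral_indicator_cos_le {c m n T : ℝ} (hc : 0 < c) (hm : 0 ≤ m) (hn : 0 ≤ n)
    (hmT : m ≤ T) (hnT : n ≤ T) :
    |∫ N in Set.Ioc 0 T, (Set.Ici (max m n)).indicator
      (fun N => cos (c * (√(N ^ 2 - m ^ 2) - √(N ^ 2 - n ^ 2)))) N| ≤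
      (if m = n then T else 0) + 4 * T ^ 2 / c * |m ^ 2 - n ^ 2|⁻¹ := by
  rcases eq_or_ne m n with rfl | hmn
  · rw [max_self, setIntegral_Ioc_indicator_Ici hm]
    simpa [hmT, abs_of_nonneg (sub_nonneg.2 hmT)] using hm
  rw [if_neg hmn, zero_add]
  wlog hlt : m < n generalizing m n
  · simpa only [max_comm n m, abs_sub_comm (n ^ 2), ← cos_neg (c * (√(_ - n ^ 2) - _)), ← mul_neg,
      neg_sub] using this hn hm hnT hmT hmn.symm (hmn.symm.lt_of_le (not_lt.1 hlt))
  rw [max_eq_right hlt.le, setIntegral_Ioc_indicator_Ici hn, ← integral_Ioc_eq_integral_Ioo,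
    ← intervalIntegral.integral_of_le hnT, abs_sub_comm (m ^ 2),
    abs_of_pos (by nlinarith : 0 < n ^ 2 - m ^ 2), ← div_eq_mul_inv, div_div]
  exact abs_integral_cos_sqrt_sub_sqrt_le hm hlt hc le_rfl hnT

lemma setIntegral_legSum_sin_sq_add_cos_sq (c : ℝ) (a : ℕ → ℝ) (M : ℕ) (T : ℝ) :
    (∫ N in Set.Ioc 0 T, legSum a M (fun t => sin (c * t)) N ^ 2) +
      ∫ N in Set.Ioc 0 T, legSum a M (fun t => cos (c * t)) N ^ 2 =
    ∑ m ∈ Finset.Icc 1 M, ∑ n ∈ Finset.Icc 1 M, a m * a n *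
      ∫ N in Set.Ioc 0 T, (Set.Ici (max m n : ℝ)).indicator
        (fun N => cos (c * (√(N ^ 2 - m ^ 2) - √(N ^ 2 - n ^ 2)))) N := by
  have hsin (m : ℕ) := memLp_legPullback (f := fun t => sin (c * t)) (C := 1) (by fun_prop)
    (fun t => abs_sin_le_one _) m T
  have hcos (m : ℕ) := memLp_legPullback (f := fun t => cos (c * t)) (C := 1) (by fun_prop)
    (fun t => abs_cos_le_one _) m T
  rw [setIntegral_legSum_sq (C := 1) (by fun_prop) (fun t => abs_sin_le_one _),
    setIntegral_legSum_sq (C := 1) (by fun_prop) (fun t => abs_cos_le_one _),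
    ← Finset.sum_add_distrib]
  refine Finset.sum_congr rfl fun m _ => ?_
  rw [← Finset.sum_add_distrib]
  refine Finset.sum_congr rfl fun n _ => ?_
  simp only [← mul_add, ← legPullback_sin_mul_add_cos_mul]
  congr 1
  exact (integral_add ((hsin m).integrable_mul (hsin n)) ((hcos m).integrable_mul (hcos n))).symm

lemma sum_sq_le_mul_sum_sq_div (a : ℕ → ℝ) (M : ℕ) :
    ∑ m ∈ Finset.Icc 1 M, a m ^ 2 ≤ M * ∑ m ∈ Finset.Icc 1 M, a m ^ 2 / m := by
  rw [Finset.mul_sum]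
  refine Finset.sum_le_sum fun m hm => ?_
  obtain ⟨hm1, hmM⟩ := Finset.mem_Icc.1 hm
  have hm0 : (0 : ℝ) < m := by exact_mod_cast hm1
  calc a m ^ 2 = m * (a m ^ 2 / m) := by field
    _ ≤ M * (a m ^ 2 / m) := by gcongr

lemma setIntegral_legSum_sin_sq_le {c : ℝ} (hc : 0 < c) (a : ℕ → ℝ) (M : ℕ) :
    ∫ N in Set.Ioc 0 (M : ℝ), legSum a M (fun t => sin (c * t)) N ^ 2 ≤
      M ^ 2 * (1 + 8 * (1 + log M) / c) * ∑ m ∈ Finset.Icc 1 M, a m ^ 2 / m := by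
  have hcast {m : ℕ} (hm : m ∈ Finset.Icc 1 M) : (m : ℝ) ≤ M := by
    exact_mod_cast (Finset.mem_Icc.1 hm).2
  calc ∫ N in Set.Ioc 0 (M : ℝ), legSum a M (fun t => sin (c * t)) N ^ 2
      ≤ ∑ m ∈ Finset.Icc 1 M, ∑ n ∈ Finset.Icc 1 M, a m * a n *
          ∫ N in Set.Ioc 0 (M : ℝ), (Set.Ici (max m n : ℝ)).indicator
            (fun N => cos (c * (√(N ^ 2 - m ^ 2) - √(N ^ 2 - n ^ 2)))) N := by
        rw [← setIntegral_legSum_sin_sq_add_cos_sq]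
        exact le_add_of_nonneg_right (integral_nonneg fun N => sq_nonneg _)
    _ ≤ ∑ m ∈ Finset.Icc 1 M, ∑ n ∈ Finset.Icc 1 M, |a m * a n| *
          ((if (m : ℝ) = n then (M : ℝ) else 0) +
            4 * M ^ 2 / c * |(m : ℝ) ^ 2 - (n : ℝ) ^ 2|⁻¹) := by
        refine Finset.sum_le_sum fun m hm => Finset.sum_le_sum fun n hn => ?_
        refine (le_abs_self _).trans ((abs_mul _ _).trans_le ?_)
        gcongr
        exact abs_setIntegral_indicator_cos_le hc m.cast_nonneg n.cast_nonneg (hcast hm) (hcast hn)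
    _ = M * ∑ m ∈ Finset.Icc 1 M, a m ^ 2 + 4 * M ^ 2 / c * ∑ m ∈ Finset.Icc 1 M,
          ∑ n ∈ Finset.Icc 1 M, |a m * a n| * |(m : ℝ) ^ 2 - (n : ℝ) ^ 2|⁻¹ := by
        simp only [mul_add, Finset.sum_add_distrib, mul_ite, mul_zero, Nat.cast_inj,
          Finset.sum_ite_eq, Finset.sum_ite_mem, Finset.inter_self, abs_sq, ← sq,
          mul_left_comm _ (4 * (M : ℝ) ^ 2 / c), ← Finset.mul_sum, ← Finset.sum_mul]
        rw [mul_comm (M : ℝ)]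
    _ ≤ M * (M * ∑ m ∈ Finset.Icc 1 M, a m ^ 2 / m) +
          4 * M ^ 2 / c * (2 * (1 + log M) * ∑ m ∈ Finset.Icc 1 M, a m ^ 2 / m) := by
        gcongr
        · exact sum_sq_le_mul_sum_sq_div a M
        · exact sum_sum_abs_mul_inv_sq_sub_sq_le a M
    _ = M ^ 2 * (1 + 8 * (1 + log M) / c) * ∑ m ∈ Finset.Icc 1 M, a m ^ 2 / m := by ring

/-! ### The Fourier series of the sawtooth function -/

lemma integral_cos_two_pi_int_mul (j : ℤ) :
    ∫ t in (0 : ℝ)..1, cos (2 * π * j * t) = if j = 0 then 1 else 0 := by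
  split_ifs with hj
  · simp [hj]
  have hsin : sin (2 * π * j * 1) = 0 := by
    rw [show 2 * π * (j : ℝ) * 1 = (2 * j : ℤ) * π by push_cast; ring, sin_int_mul_pi]
  rw [intervalIntegral.integral_comp_mul_left _ (by simp [hj, pi_ne_zero]), integral_cos, hsin]
  simp

lemma integral_sin_mul_sin_two_pi_nat_mul {k l : ℕ} (hk : k ≠ 0) :
    ∫ t in (0 : ℝ)..1, sin (2 * π * k * t) * sin (2 * π * l * t) = if k = l then 1 / 2 else 0 := by
  have hprod (t : ℝ) : sin (2 * π * k * t) * sin (2 * π * l * t) =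
      (cos (2 * π * (k - l : ℤ) * t) - cos (2 * π * (k + l : ℤ) * t)) / 2 := by
    push_cast
    rw [show 2 * π * ((k : ℝ) - l) * t = 2 * π * k * t - 2 * π * l * t by ring,
      show 2 * π * ((k : ℝ) + l) * t = 2 * π * k * t + 2 * π * l * t by ring, cos_sub, cos_add]
    ring
  simp only [hprod]
  rw [intervalIntegral.integral_div, intervalIntegral.integral_sub
    (Continuous.intervalIntegrable (by fun_prop) _ _)
    (Continuous.intervalIntegrable (by fun_prop) _ _),
    integral_cos_two_pi_int_mul, integral_cos_two_pi_int_mul, if_neg (show (k + l : ℤ) ≠ 0 by lia)]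
  simp only [sub_eq_zero, Nat.cast_inj, sub_zero, ite_div, zero_div]

lemma integral_sub_half_mul_sin {k : ℕ} (hk : k ≠ 0) :
    ∫ t in (0 : ℝ)..1, (t - 1 / 2) * sin (2 * π * k * t) = -1 / (2 * π * k) := by
  have hc : 2 * π * (k : ℝ) ≠ 0 := by simp [hk, pi_ne_zero]
  have hcos : cos (2 * π * k * 1) = 1 := by
    rw [mul_one, mul_comm, cos_nat_mul_two_pi]
  have hderiv (t : ℝ) : HasDerivAt (fun t => -cos (2 * π * k * t) / (2 * π * k))
      (sin (2 * π * k * t)) t := by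
    refine ((((hasDerivAt_id t).const_mul (2 * π * (k : ℝ))).cos.neg).div_const
      (2 * π * k)).congr_deriv ?_
    simp only [id, mul_one]
    field
  rw [intervalIntegral.integral_mul_deriv_eq_deriv_mul
    (fun t _ => (hasDerivAt_id' t).sub_const (1 / 2)) (fun t _ => hderiv t)
    (Continuous.intervalIntegrable (by fun_prop) _ _)
    (Continuous.intervalIntegrable (by fun_prop) _ _)]
  have hmean := integral_cos_two_pi_int_mul k
  rw [if_neg (by exact_mod_cast hk), Int.cast_natCast] at hmean
  simp only [one_mul, intervalIntegral.integral_div, intervalIntegral.integral_neg, hmean, hcos,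
    mul_zero, cos_zero]
  field

lemma integral_sub_half_add_sum_sin_sq (K : ℕ) :
    ∫ t in (0 : ℝ)..1, (t - 1 / 2 + ∑ k ∈ Finset.Icc 1 K, sin (2 * π * k * t) / (π * k)) ^ 2 =
      1 / 12 - (∑ k ∈ Finset.Icc 1 K, ((k : ℝ) ^ 2)⁻¹) / (2 * π ^ 2) := by
  have hexpand (t : ℝ) :
      (t - 1 / 2 + ∑ k ∈ Finset.Icc 1 K, sin (2 * π * k * t) / (π * k)) ^ 2 =
      (t - 1 / 2) ^ 2 +
        ∑ k ∈ Finset.Icc 1 K, 2 / (π * k) * ((t - 1 / 2) * sin (2 * π * k * t)) +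
        ∑ k ∈ Finset.Icc 1 K, ∑ l ∈ Finset.Icc 1 K,
          1 / (π * k * (π * l)) * (sin (2 * π * k * t) * sin (2 * π * l * t)) := by
    rw [add_sq, sq (Finset.sum _ _), Finset.sum_mul_sum, Finset.mul_sum]
    congr! 1
    · congr! 2
      ring
    · exact Finset.sum_congr rfl fun k _ => Finset.sum_congr rfl fun l _ => by ring
  have hsq : ∫ t in (0 : ℝ)..1, (t - 1 / 2) ^ 2 = 1 / 12 := by
    norm_num [intervalIntegral.integral_comp_sub_right (fun t : ℝ => t ^ 2)]
  simp only [hexpand]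
  repeat rw [intervalIntegral.integral_add (Continuous.intervalIntegrable (by fun_prop) _ _)
    (Continuous.intervalIntegrable (by fun_prop) _ _)]
  simp (disch := exact fun _ _ => Continuous.intervalIntegrable (by fun_prop) _ _) only
    [intervalIntegral.integral_finsetSum, intervalIntegral.integral_const_mul]
  rw [hsq, add_assoc, ← Finset.sum_add_distrib, sub_eq_add_neg, Finset.sum_div,
    ← Finset.sum_neg_distrib]
  congr 1
  refine Finset.sum_congr rfl fun k hk => ?_
  have hk0 : k ≠ 0 := by grind
  simp only [integral_sub_half_mul_sin hk0, integral_sin_mul_sin_two_pi_nat_mul hk0, mul_ite,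
    mul_zero, Finset.sum_ite_eq, if_pos hk]
  field

lemma pi_sq_div_six_sub_inv_le_sum {K : ℕ} (hK : K ≠ 0) :
    π ^ 2 / 6 - (K : ℝ)⁻¹ ≤ ∑ k ∈ Finset.Icc 1 K, ((k : ℝ) ^ 2)⁻¹ := by
  have hlim := (tendsto_add_atTop_iff_nat 1).2 hasSum_zeta_two.tendsto_sum_nat
  refine sub_le_iff_le_add.2 (le_of_tendsto hlim (eventually_atTop.2 ⟨K, fun n hn => ?_⟩))
  calc ∑ k ∈ Finset.range (n + 1), 1 / (k : ℝ) ^ 2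
      = ∑ k ∈ Finset.Ioc 0 K, ((k : ℝ) ^ 2)⁻¹ + ∑ k ∈ Finset.Ioc K n, ((k : ℝ) ^ 2)⁻¹ := by
        rw [Finset.sum_Ioc_consecutive _ K.zero_le hn, Nat.range_succ_eq_Icc_zero,
          ← Finset.Ioc_insert_left n.zero_le]
        simp [-Finset.Ioc_insert_left]
    _ ≤ ∑ k ∈ Finset.Icc 1 K, ((k : ℝ) ^ 2)⁻¹ + (K : ℝ)⁻¹ := by
        gcongr
        · rfl
        · exact (sum_Ioc_inv_sq_le_sub hK hn).trans (sub_le_self _ (by positivity))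

/-- The remainder of the `K`-th partial sum of the Fourier series
`ψ(t) = -∑ₖ sin(2πkt) / (πk)` of the sawtooth function. -/
def sawtoothRemainder (K : ℕ) (t : ℝ) : ℝ :=
  sawtooth t + ∑ k ∈ Finset.Icc 1 K, sin (2 * π * k * t) / (π * k)

lemma measurable_sawtooth : Measurable sawtooth := by
  unfold sawtooth
  fun_prop

lemma abs_sawtooth_le_one (t : ℝ) : |sawtooth t| ≤ 1 := by
  rw [sawtooth, abs_le]
  constructor <;> linarith [Int.floor_le t, Int.lt_floor_add_one t]

lemma measurable_sawtoothRemainder (K : ℕ) : Measurable (sawtoothRemainder K) := by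
  have := measurable_sawtooth
  unfold sawtoothRemainder
  fun_prop

lemma abs_sawtoothRemainder_le (K : ℕ) (t : ℝ) :
    |sawtoothRemainder K t| ≤ 1 + ∑ k ∈ Finset.Icc 1 K, 1 / (π * k) := by
  refine (abs_add_le _ _).trans (add_le_add (abs_sawtooth_le_one t) ?_)
  refine (Finset.abs_sum_le_sum_abs _ _).trans (Finset.sum_le_sum fun k _ => ?_)
  rw [abs_div, abs_of_nonneg (by positivity : 0 ≤ π * k)]
  gcongr
  exact abs_sin_le_one _

lemma periodic_sawtoothRemainder (K : ℕ) : Function.Periodic (sawtoothRemainder K) 1 := by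
  intro t
  have hsin (k : ℕ) : sin (2 * π * k * (t + 1)) = sin (2 * π * k * t) := by
    rw [mul_add, mul_one, mul_comm (2 * π) (k : ℝ), sin_add_nat_mul_two_pi]
  simp only [sawtoothRemainder, sawtooth, hsin, Int.floor_add_one]
  push_cast
  ring

lemma integral_sawtoothRemainder_sq_le {K : ℕ} (hK : K ≠ 0) :
    ∫ t in (0 : ℝ)..1, sawtoothRemainder K t ^ 2 ≤ (K : ℝ)⁻¹ := by
  have hcongr : ∫ t in (0 : ℝ)..1, sawtoothRemainder K t ^ 2 =
      ∫ t in (0 : ℝ)..1,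
        (t - 1 / 2 + ∑ k ∈ Finset.Icc 1 K, sin (2 * π * k * t) / (π * k)) ^ 2 := by
    simp only [intervalIntegral.integral_of_le zero_le_one, integral_Ioc_eq_integral_Ioo]
    refine setIntegral_congr_fun measurableSet_Ioo fun t ht => ?_
    simp [sawtoothRemainder, sawtooth, Int.floor_eq_zero_iff.2 ⟨ht.1.le, ht.2⟩]
  have hpi : 1 ≤ 2 * π ^ 2 := by nlinarith [pi_gt_three]
  calc ∫ t in (0 : ℝ)..1, sawtoothRemainder K t ^ 2
      = 1 / 12 - (∑ k ∈ Finset.Icc 1 K, ((k : ℝ) ^ 2)⁻¹) / (2 * π ^ 2) := by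
        rw [hcongr, integral_sub_half_add_sum_sin_sq]
    _ ≤ 1 / 12 - (π ^ 2 / 6 - (K : ℝ)⁻¹) / (2 * π ^ 2) := by
        gcongr
        exact pi_sq_div_six_sub_inv_le_sum hK
    _ = (K : ℝ)⁻¹ / (2 * π ^ 2) := by field
    _ ≤ (K : ℝ)⁻¹ := div_le_self (by positivity) hpi

lemma setIntegral_sawtoothRemainder_sq_le {K : ℕ} (hK : K ≠ 0) (M : ℕ) :
    ∫ t in Set.Ioc 0 (M : ℝ), sawtoothRemainder K t ^ 2 ≤ M / K := by
  have hper : Function.Periodic (fun t => sawtoothRemainder K t ^ 2) 1 := fun t => by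
    simp only [periodic_sawtoothRemainder K t]
  have hmul := hper.intervalIntegral_add_zsmul_eq M 0
  simp only [natCast_zsmul, nsmul_eq_mul, mul_one, zero_add] at hmul
  have hint (a b : ℝ) : IntegrableOn (fun t => sawtoothRemainder K t ^ 2) (Set.Ioc a b) :=
    (MemLp.of_bound (measurable_sawtoothRemainder K).aestronglyMeasurable _
      (ae_of_all _ (abs_sawtoothRemainder_le K))).integrable_sq
  rw [← intervalIntegral.integral_of_le M.cast_nonneg, hmul fun a b => ⟨hint a b, hint b a⟩,
    div_eq_mul_inv]
  gcongr
  exact integral_sawtoothRemainder_sq_le hK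

/-! ### Weighted sums of the sawtooth function -/

/-- The sum `∑ₘ aₘ ψ(√(N² - m²))` over `1 ≤ m ≤ N`, so that `Ξ_ψ(x;ω)` is the difference of its
values at `N = (x + ω(x))²` and `N = x²` for `a = r₂`. -/
def weightedSawtoothSum (a : ℕ → ℝ) (N : ℝ) : ℝ :=
  ∑ m ∈ Finset.Icc 1 ⌊N⌋₊, a m * sawtooth √(N ^ 2 - m ^ 2)

lemma weightedSawtoothSum_eq_legSum (a : ℕ → ℝ) {M : ℕ} {N : ℝ} (hN : 0 ≤ N) (hNM : N ≤ M) :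
    weightedSawtoothSum a N = legSum a M sawtooth N := by
  have hmem (m : ℕ) : N ∈ Set.Ici (m : ℝ) ↔ m ≤ ⌊N⌋₊ := (Nat.le_floor_iff hN).symm
  refine (Finset.sum_congr rfl fun m hm => ?_).trans (Finset.sum_subset
    (Finset.Icc_subset_Icc_right (Nat.floor_le_of_le hNM)) fun m hm hm' => ?_)
  · rw [legPullback, Set.indicator_of_mem ((hmem m).2 (Finset.mem_Icc.1 hm).2)]
  · rw [legPullback, Set.indicator_of_notMem (by grind), mul_zero]

lemma legSum_sawtooth (a : ℕ → ℝ) (M K : ℕ) (N : ℝ) :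
    legSum a M sawtooth N = legSum a M (sawtoothRemainder K) N -
      ∑ k ∈ Finset.Icc 1 K, legSum a M (fun t => sin (2 * π * k * t)) N / (π * k) := by
  simp only [legSum, Finset.sum_div]
  rw [Finset.sum_comm, ← Finset.sum_sub_distrib]
  refine Finset.sum_congr rfl fun m _ => ?_
  by_cases hm : N ∈ Set.Ici (m : ℝ)
  · simp only [legPullback, Set.indicator_of_mem hm, sawtoothRemainder, mul_add, Finset.mul_sum,
      mul_div_assoc, add_sub_cancel_right]
  · simp [legPullback, hm]

lemma sq_sum_div_pi_mul_le (F : ℕ → ℝ) (K : ℕ) :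
    (∑ k ∈ Finset.Icc 1 K, F k / (π * k)) ^ 2 ≤
      (1 + log K) * ∑ k ∈ Finset.Icc 1 K, F k ^ 2 / k := by
  have hsq (k : ℕ) : (F k / (π * k)) ^ 2 ≤ (k : ℝ)⁻¹ * (F k ^ 2 / k) := by
    calc (F k / (π * k)) ^ 2 = (π ^ 2)⁻¹ * ((k : ℝ)⁻¹ * (F k ^ 2 / k)) := by ring
      _ ≤ (k : ℝ)⁻¹ * (F k ^ 2 / k) :=
        mul_le_of_le_one_left (by positivity) (inv_le_one_of_one_le₀ (by nlinarith [pi_gt_three]))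
  calc (∑ k ∈ Finset.Icc 1 K, F k / (π * k)) ^ 2
      ≤ (∑ k ∈ Finset.Icc 1 K, (k : ℝ)⁻¹) * ∑ k ∈ Finset.Icc 1 K, F k ^ 2 / k :=
        Finset.sum_sq_le_sum_mul_sum_of_sq_le_mul _ (fun k _ => by positivity)
          (fun k _ => by positivity) fun k _ => hsq k
    _ ≤ (1 + log K) * ∑ k ∈ Finset.Icc 1 K, F k ^ 2 / k := by
        gcongr
        exact sum_inv_le_one_add_log K

lemma sum_inv_sq_le_two (K : ℕ) : ∑ k ∈ Finset.Icc 1 K, ((k : ℝ) ^ 2)⁻¹ ≤ 2 := by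
  have hle := sum_le_hasSum (Finset.Icc 1 K) (fun k _ => by positivity) hasSum_zeta_two
  simp only [one_div] at hle
  nlinarith [pi_lt_d2, pi_pos]

section MeanSquare

variable (a : ℕ → ℝ) {M : ℕ}

lemma setIntegral_sum_legSum_sin_sq_le (hM : M ≠ 0) :
    ∫ N in Set.Ioc 0 (M : ℝ),
      (∑ k ∈ Finset.Icc 1 M, legSum a M (fun t => sin (2 * π * k * t)) N / (π * k)) ^ 2 ≤
    5 * M ^ 2 * (1 + log M) ^ 2 * ∑ m ∈ Finset.Icc 1 M, a m ^ 2 / m := by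
  set L := 1 + log M
  set A := ∑ m ∈ Finset.Icc 1 M, a m ^ 2 / m
  have hL : 0 ≤ L := by positivity
  have hA : 0 ≤ A := by positivity
  have hmemLp (k : ℕ) : MemLp (legSum a M fun t => sin (2 * π * k * t)) 2
      (volume.restrict (Set.Ioc 0 (M : ℝ))) :=
    memLp_legSum (C := 1) (by fun_prop) (fun t => abs_sin_le_one _) a M M
  have hterm (k : ℕ) (hk : k ∈ Finset.Icc 1 M) :
      (∫ N in Set.Ioc 0 (M : ℝ), legSum a M (fun t => sin (2 * π * k * t)) N ^ 2) / k ≤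
        M ^ 2 * A * ((k : ℝ)⁻¹ + 2 * L * ((k : ℝ) ^ 2)⁻¹) := by
    have hk0 : (0 : ℝ) < k := by exact_mod_cast (Finset.mem_Icc.1 hk).1
    calc _ ≤ M ^ 2 * (1 + 8 * L / (2 * π * k)) * A / k := by
          gcongr
          exact setIntegral_legSum_sin_sq_le (by positivity) a M
      _ = M ^ 2 * A * ((k : ℝ)⁻¹ + 4 / π * L * ((k : ℝ) ^ 2)⁻¹) := by field
      _ ≤ M ^ 2 * A * ((k : ℝ)⁻¹ + 2 * L * ((k : ℝ) ^ 2)⁻¹) := by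
          gcongr
          rw [div_le_iff₀ pi_pos]
          linarith [pi_gt_three]
  calc ∫ N in Set.Ioc 0 (M : ℝ),
        (∑ k ∈ Finset.Icc 1 M, legSum a M (fun t => sin (2 * π * k * t)) N / (π * k)) ^ 2
      ≤ ∫ N in Set.Ioc 0 (M : ℝ),
          L * ∑ k ∈ Finset.Icc 1 M, legSum a M (fun t => sin (2 * π * k * t)) N ^ 2 / k := by
        refine integral_mono_of_nonneg (ae_of_all _ fun N => sq_nonneg _)
          ((integrable_finsetSum _ fun k _ => (hmemLp k).integrable_sq.div_const _).const_mul L)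
          (ae_of_all _ fun N => sq_sum_div_pi_mul_le _ M)
    _ = L * ∑ k ∈ Finset.Icc 1 M,
          (∫ N in Set.Ioc 0 (M : ℝ), legSum a M (fun t => sin (2 * π * k * t)) N ^ 2) / k := by
        rw [integral_const_mul,
          integral_finsetSum _ fun k _ => (hmemLp k).integrable_sq.div_const _]
        simp only [integral_div]
    _ ≤ L * (M ^ 2 * A * (L + 2 * L * 2)) := by
        refine mul_le_mul_of_nonneg_left ((Finset.sum_le_sum hterm).trans ?_) hL
        rw [← Finset.mul_sum, Finset.sum_add_distrib, ← Finset.mul_sum]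
        gcongr
        · exact sum_inv_le_one_add_log M
        · exact sum_inv_sq_le_two M
    _ = 5 * M ^ 2 * L ^ 2 * A := by ring

lemma setIntegral_legSum_sawtoothRemainder_sq_le (hM : M ≠ 0) :
    ∫ N in Set.Ioc 0 (M : ℝ), legSum a M (sawtoothRemainder M) N ^ 2 ≤
      M ^ 2 * ∑ m ∈ Finset.Icc 1 M, a m ^ 2 / m := by
  calc ∫ N in Set.Ioc 0 (M : ℝ), legSum a M (sawtoothRemainder M) N ^ 2
      ≤ M * (∑ m ∈ Finset.Icc 1 M, a m ^ 2) *
          ∫ t in Set.Ioc 0 (M : ℝ), sawtoothRemainder M t ^ 2 :=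
        setIntegral_legSum_sq_le (measurable_sawtoothRemainder M) (abs_sawtoothRemainder_le M) a M M
    _ ≤ M * (M * ∑ m ∈ Finset.Icc 1 M, a m ^ 2 / m) * 1 := by
        gcongr
        · exact sum_sq_le_mul_sum_sq_div a M
        · simpa [hM] using setIntegral_sawtoothRemainder_sq_le hM M
    _ = M ^ 2 * ∑ m ∈ Finset.Icc 1 M, a m ^ 2 / m := by ring

lemma setIntegral_legSum_sawtooth_sq_le (hM : M ≠ 0) :
    ∫ N in Set.Ioc 0 (M : ℝ), legSum a M sawtooth N ^ 2 ≤
      12 * M ^ 2 * (1 + log M) ^ 2 * ∑ m ∈ Finset.Icc 1 M, a m ^ 2 / m := by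
  set A := ∑ m ∈ Finset.Icc 1 M, a m ^ 2 / m
  set F := fun N =>
    ∑ k ∈ Finset.Icc 1 M, legSum a M (fun t => sin (2 * π * k * t)) N / (π * k)
  set R := legSum a M (sawtoothRemainder M)
  have hR : Integrable (fun N => R N ^ 2) (volume.restrict (Set.Ioc 0 (M : ℝ))) :=
    (memLp_legSum (measurable_sawtoothRemainder M) (abs_sawtoothRemainder_le M) a M M).integrable_sq
  have hF : Integrable (fun N => F N ^ 2) (volume.restrict (Set.Ioc 0 (M : ℝ))) := by
    refine (memLp_finsetSum _ fun k _ => ?_).integrable_sq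
    simpa only [div_eq_inv_mul] using
      (memLp_legSum (C := 1) (by fun_prop) (fun t => abs_sin_le_one _) a M M).const_mul _
  calc ∫ N in Set.Ioc 0 (M : ℝ), legSum a M sawtooth N ^ 2
      ≤ ∫ N in Set.Ioc 0 (M : ℝ), (2 * R N ^ 2 + 2 * F N ^ 2) := by
        refine integral_mono_of_nonneg (ae_of_all _ fun N => sq_nonneg _)
          ((hR.const_mul 2).add (hF.const_mul 2)) (ae_of_all _ fun N => ?_)
        simp only [legSum_sawtooth a M M]
        nlinarith [sq_nonneg (R N + F N)]
    _ = 2 * (∫ N in Set.Ioc 0 (M : ℝ), R N ^ 2) + 2 * ∫ N in Set.Ioc 0 (M : ℝ), F N ^ 2 := by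
        rw [integral_add (hR.const_mul 2) (hF.const_mul 2), integral_const_mul, integral_const_mul]
    _ ≤ 2 * (M ^ 2 * A) + 2 * (5 * M ^ 2 * (1 + log M) ^ 2 * A) := by
        gcongr
        · exact setIntegral_legSum_sawtoothRemainder_sq_le a hM
        · exact setIntegral_sum_legSum_sin_sq_le a hM
    _ ≤ 2 * (M ^ 2 * ((1 + log M) ^ 2 * A)) + 2 * (5 * M ^ 2 * (1 + log M) ^ 2 * A) := by
        gcongr
        exact le_mul_of_one_le_left (by positivity)
          (one_le_pow₀ (le_add_of_nonneg_right (log_natCast_nonneg M)))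
    _ = 12 * M ^ 2 * (1 + log M) ^ 2 * A := by ring

end MeanSquare

/-! ### The mean square of `Ξ_ψ` -/

open Asymptotics

lemma weightedSawtoothSum_sq_ae_eq (a : ℕ → ℝ) {M : ℕ} {T : ℝ} (hTM : T ≤ M) :
    ∀ᵐ N ∂volume.restrict (Set.Ioc 0 T),
      weightedSawtoothSum a N ^ 2 = legSum a M sawtooth N ^ 2 :=
  ae_restrict_of_forall_mem measurableSet_Ioc fun N hN => by
    rw [weightedSawtoothSum_eq_legSum a hN.1.le (hN.2.trans hTM)]

lemma integrableOn_weightedSawtoothSum_sq (a : ℕ → ℝ) (T : ℝ) :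
    IntegrableOn (fun N => weightedSawtoothSum a N ^ 2) (Set.Ioc 0 T) :=
  (integrable_congr (weightedSawtoothSum_sq_ae_eq a (Nat.le_ceil T))).2
    (memLp_legSum measurable_sawtooth abs_sawtooth_le_one a ⌈T⌉₊ T).integrable_sq

lemma setIntegral_weightedSawtoothSum_r2_sq_le {T : ℝ} (hT : 1 ≤ T) :
    ∫ N in Set.Ioc 0 T, weightedSawtoothSum (fun m => r2 m) N ^ 2 ≤
      24000 * (T ^ 2 * (1 + log (2 * T)) ^ 4) := by
  have hM : ⌈T⌉₊ ≠ 0 := by simpa using zero_lt_one.trans_le hT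
  calc ∫ N in Set.Ioc 0 T, weightedSawtoothSum (fun m => r2 m) N ^ 2
      ≤ ∫ N in Set.Ioc 0 (⌈T⌉₊ : ℝ), weightedSawtoothSum (fun m => r2 m) N ^ 2 :=
        setIntegral_mono_set (integrableOn_weightedSawtoothSum_sq _ _)
          (ae_of_all _ fun N => sq_nonneg _)
          (Set.Ioc_subset_Ioc_right (Nat.le_ceil T)).eventuallyLE
    _ = ∫ N in Set.Ioc 0 (⌈T⌉₊ : ℝ), legSum (fun m => r2 m) ⌈T⌉₊ sawtooth N ^ 2 :=
        integral_congr_ae (weightedSawtoothSum_sq_ae_eq _ le_rfl)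
    _ ≤ 12 * ⌈T⌉₊ ^ 2 * (1 + log ⌈T⌉₊) ^ 2 * ∑ m ∈ Finset.Icc 1 ⌈T⌉₊, (r2 m : ℝ) ^ 2 / m :=
        setIntegral_legSum_sawtooth_sq_le _ hM
    _ ≤ 12 * ⌈T⌉₊ ^ 2 * (1 + log ⌈T⌉₊) ^ 2 * (500 * (1 + log ⌈T⌉₊) ^ 2) := by
        gcongr
        exact sum_r2_sq_div_le _
    _ = 6000 * (⌈T⌉₊ ^ 2 * (1 + log ⌈T⌉₊) ^ 4) := by ring
    _ ≤ 6000 * ((2 * T) ^ 2 * (1 + log (2 * T)) ^ 4) := by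
        have hceil : (⌈T⌉₊ : ℝ) ≤ 2 * T := Nat.ceil_le_two_mul (by linarith)
        gcongr
    _ = 24000 * (T ^ 2 * (1 + log (2 * T)) ^ 4) := by ring

lemma isBigO_setIntegral_weightedSawtoothSum_r2_sq :
    (fun T => ∫ N in Set.Ioc 0 T, weightedSawtoothSum (fun m => r2 m) N ^ 2) =O[atTop]
      fun T => T ^ 2 * log T ^ 4 := by
  have hlog : (fun T => 1 + log (2 * T)) =O[atTop] log :=
    isLittleO_const_log_atTop.isBigO.add (isBigO_log_const_mul_log_atTop 2)
  refine IsBigO.trans (.of_bound 24000 ?_) ((isBigO_refl (· ^ 2) atTop).mul (hlog.pow 4))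
  filter_upwards [eventually_ge_atTop 1] with T hT
  rw [norm_of_nonneg (integral_nonneg fun N => sq_nonneg _), norm_of_nonneg (by positivity)]
  exact setIntegral_weightedSawtoothSum_r2_sq_le hT

lemma eventually_mul_le_of_le_deriv {ν : ℝ → ℝ} {c δ : ℝ} (hδ : 0 < δ) (hcδ : c < δ)
    (hν : ∀ᶠ x in atTop, δ ≤ deriv ν x) : ∀ᶠ x in atTop, c * x ≤ ν x := by
  obtain ⟨x₀, hx₀⟩ := eventually_atTop.1 hν
  have hderiv := hasDerivAt_of_le_deriv (s := Set.Ici x₀) hδ hx₀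
  have hlin := tendsto_id.const_mul_atTop (sub_pos.2 hcδ)
  filter_upwards [eventually_ge_atTop x₀, hlin.eventually_ge_atTop (δ * x₀ - ν x₀)]
    with x hx hlarge
  have hgrowth : δ * (x - x₀) ≤ ν x - ν x₀ :=
    (convex_Ici x₀).mul_sub_le_image_sub_of_le_deriv
      (fun y hy => (hderiv y hy).continuousAt.continuousWithinAt)
      (fun y hy => (hderiv y (interior_subset hy)).differentiableAt.differentiableWithinAt)
      (fun y hy => hx₀ y (interior_subset hy)) x₀ Set.self_mem_Ici x hx hx
  rw [id] at hlarge
  linarith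

section Reparametrization

variable {ν : ℝ → ℝ} {δ : ℝ}

lemma eventually_le_deriv_sq (hδ : 0 < δ) (hν : ∀ᶠ x in atTop, δ ≤ deriv ν x) :
    ∀ᶠ X in atTop, ∀ x ∈ Set.Ioo X (2 * X), δ ^ 2 * X ≤ deriv (fun x => ν x ^ 2) x := by
  obtain ⟨x₀, hx₀⟩ := eventually_atTop.1
    (hν.and (eventually_mul_le_of_le_deriv hδ (half_lt_self hδ) hν))
  filter_upwards [eventually_ge_atTop x₀, eventually_gt_atTop 0] with X hX hX0 x hx
  obtain ⟨hderiv, hge⟩ := hx₀ x (hX.trans hx.1.le)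
  have hderiv_sq := (hasDerivAt_of_le_deriv (s := {x}) (g := ν) hδ (by simpa) x rfl).fun_pow 2
  have hν0 : 0 ≤ ν x := le_trans (by have := hX0.trans hx.1; positivity) hge
  calc δ ^ 2 * X = 2 * (δ / 2 * X) * δ := by ring
    _ ≤ 2 * (δ / 2 * x) * δ := by gcongr; exact hx.1.le
    _ ≤ 2 * ν x * deriv ν x := by gcongr
    _ = deriv (fun x => ν x ^ 2) x := by
      rw [hderiv_sq.deriv]
      simp

lemma exists_eventually_mapsTo_sq (hδ : 0 < δ) (hν : ∀ᶠ x in atTop, δ ≤ deriv ν x)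
    (hO : ν =O[atTop] id) :
    ∃ B > 0, ∀ᶠ X in atTop,
      Set.MapsTo (fun x => ν x ^ 2) (Set.Ioo X (2 * X)) (Set.Ioc 0 (B * X ^ 2)) := by
  obtain ⟨C, hC0, hC⟩ := hO.exists_pos
  obtain ⟨x₀, hx₀⟩ := eventually_atTop.1
    (hC.bound.and (eventually_mul_le_of_le_deriv hδ (half_lt_self hδ) hν))
  refine ⟨4 * C ^ 2, by positivity, ?_⟩
  filter_upwards [eventually_ge_atTop x₀, eventually_gt_atTop 0] with X hX hX0 x hx
  obtain ⟨hle, hge⟩ := hx₀ x (hX.trans hx.1.le)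
  have hx0 : 0 < x := hX0.trans hx.1
  have hν0 : 0 < ν x := lt_of_lt_of_le (by positivity) hge
  simp only [id, norm_of_nonneg hx0.le, norm_of_nonneg hν0.le] at hle
  refine ⟨by positivity, ?_⟩
  calc ν x ^ 2 ≤ (C * (2 * X)) ^ 2 := by
        gcongr
        exact hle.trans (by gcongr; exact hx.2.le)
    _ = 4 * C ^ 2 * X ^ 2 := by ring

lemma eventually_integrableOn_weightedSawtoothSum_comp_sq (hδ : 0 < δ)
    (hν : ∀ᶠ x in atTop, δ ≤ deriv ν x) (hO : ν =O[atTop] id) (a : ℕ → ℝ) :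
    ∀ᶠ X in atTop,
      IntegrableOn (fun x => weightedSawtoothSum a (ν x ^ 2) ^ 2) (Set.Ioo X (2 * X)) := by
  obtain ⟨B, -, hB⟩ := exists_eventually_mapsTo_sq hδ hν hO
  filter_upwards [hB, eventually_le_deriv_sq hδ hν, eventually_gt_atTop 0] with X hmaps hderiv hX
  exact integrableOn_comp_of_le_deriv (f := fun N => weightedSawtoothSum a N ^ 2) isOpen_Ioo
    (convex_Ioo X _) (by positivity : 0 < δ ^ 2 * X) hderiv hmaps
    (integrableOn_weightedSawtoothSum_sq a _)

lemma isBigO_setIntegral_weightedSawtoothSum_r2_comp_sq (hδ : 0 < δ)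
    (hν : ∀ᶠ x in atTop, δ ≤ deriv ν x) (hO : ν =O[atTop] id) :
    (fun X => ∫ x in Set.Ioo X (2 * X), weightedSawtoothSum (fun m => r2 m) (ν x ^ 2) ^ 2)
      =O[atTop] fun X => X ^ 3 * log X ^ 4 := by
  obtain ⟨B, hB0, hB⟩ := exists_eventually_mapsTo_sq hδ hν hO
  set Φ := fun T => ∫ N in Set.Ioc 0 T, weightedSawtoothSum (fun m => r2 m) N ^ 2
  have hΦ : (fun X => Φ (B * X ^ 2)) =O[atTop] fun X => X ^ 4 * log X ^ 4 := by
    have htop : Tendsto (fun X : ℝ => B * X ^ 2) atTop atTop :=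
      (tendsto_pow_atTop two_ne_zero).const_mul_atTop hB0
    have hlog : (fun X => log (B * X ^ 2)) =O[atTop] log := by
      refine ((isBigO_log_const_mul_log_atTop B).comp_tendsto
        (tendsto_pow_atTop two_ne_zero)).trans ?_
      simpa [Function.comp_def, log_pow] using (isBigO_refl log atTop).const_mul_left 2
    refine (isBigO_setIntegral_weightedSawtoothSum_r2_sq.comp_tendsto htop).trans
      (IsBigO.mul ?_ (hlog.pow 4))
    simpa only [mul_pow, ← pow_mul] using (isBigO_refl (· ^ 4) atTop).const_mul_left (B ^ 2)
  have hdiv : (fun X => X⁻¹ * Φ (B * X ^ 2)) =O[atTop] fun X => X ^ 3 * log X ^ 4 := by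
    refine ((isBigO_refl (·⁻¹) atTop).mul hΦ).congr' EventuallyEq.rfl ?_
    filter_upwards [eventually_ne_atTop 0] with X hX
    field
  refine IsBigO.trans (.of_bound (δ ^ 2)⁻¹ ?_) hdiv
  filter_upwards [hB, eventually_le_deriv_sq hδ hν, eventually_gt_atTop 0] with X hmaps hderiv hX
  have hle : δ ^ 2 * X * _ ≤ Φ (B * X ^ 2) :=
    mul_setIntegral_comp_le (f := fun N => weightedSawtoothSum (fun m => r2 m) N ^ 2) isOpen_Ioo
      (convex_Ioo X _) (by positivity) hderiv hmaps (integrableOn_weightedSawtoothSum_sq _ _)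
      fun N => sq_nonneg _
  rw [norm_of_nonneg (integral_nonneg fun x => sq_nonneg _), norm_of_nonneg
    (mul_nonneg (by positivity) (integral_nonneg fun N => sq_nonneg _)), ← mul_assoc, ← mul_inv]
  exact (le_inv_mul_iff₀ (by positivity)).2 hle

end Reparametrization

lemma XiPsi_eq_sub (ω : ℝ → ℝ) (x : ℝ) :
    XiPsi ω x = weightedSawtoothSum (fun m => r2 m) ((x + ω x) ^ 2) -
      weightedSawtoothSum (fun m => r2 m) (x ^ 2) := by
  simp only [XiPsi, weightedSawtoothSum, ← pow_mul]

lemma isBigO_integral_XiPsi_sq {ω : ℝ → ℝ} {δ : ℝ} (hδ : 0 < δ)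
    (hν : ∀ᶠ x in atTop, δ ≤ deriv (fun x => x + ω x) x) (hO : ω =O[atTop] id) :
    (fun X => ∫ x in X..(2 * X), XiPsi ω x ^ 2) =O[atTop] fun X => X ^ 3 * log X ^ 4 := by
  have hO' : (fun x => x + ω x) =O[atTop] id := (isBigO_refl id atTop).add hO
  have hid : ∀ᶠ x : ℝ in atTop, 1 ≤ deriv id x := .of_forall fun x => (deriv_id x).ge
  have hidO : (id : ℝ → ℝ) =O[atTop] id := isBigO_refl _ _
  refine IsBigO.trans (.of_bound 2 ?_)
    ((isBigO_setIntegral_weightedSawtoothSum_r2_comp_sq hδ hν hO').add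
      (isBigO_setIntegral_weightedSawtoothSum_r2_comp_sq one_pos hid hidO))
  filter_upwards [eventually_integrableOn_weightedSawtoothSum_comp_sq hδ hν hO' fun m => r2 m,
    eventually_integrableOn_weightedSawtoothSum_comp_sq one_pos hid hidO fun m => r2 m,
    eventually_ge_atTop 0] with X hint hint_id hX
  rw [intervalIntegral.integral_of_le (by linarith), integral_Ioc_eq_integral_Ioo,
    ← integral_add hint hint_id, norm_of_nonneg (integral_nonneg fun x => sq_nonneg _),
    norm_of_nonneg (integral_nonneg fun x => by positivity), ← integral_const_mul]
  refine integral_mono_of_nonneg (ae_of_all _ fun x => sq_nonneg _)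
    ((hint.add hint_id).const_mul 2) (ae_of_all _ fun x => ?_)
  simp only [XiPsi_eq_sub, id, sub_eq_add_neg]
  exact add_sq_le.trans_eq (by rw [neg_sq])

theorem xi_psi_mean_square_general {ω : ℝ → ℝ} {δ : ℝ} (hδ : 0 < δ)
    (hdiff : ∀ᶠ x in atTop, DifferentiableAt ℝ ω x) (hO : ω =O[atTop] id)
    (hderiv : ∀ᶠ x in atTop, -1 + δ ≤ deriv ω x) :
    ∃ C > (0 : ℝ), ∃ X₀ > (0 : ℝ), ∀ X ≥ X₀,
      (1 / X) * ∫ x in X..(2 * X), XiPsi ω x ^ 2 ≤ C * X ^ 2 * Real.log X ^ 4 := by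
  have hν : ∀ᶠ x in atTop, δ ≤ deriv (fun x => x + ω x) x := by
    filter_upwards [hdiff, hderiv] with x hx hle
    rw [deriv_fun_add differentiableAt_fun_id hx, deriv_id'']
    linarith
  obtain ⟨C, hC0, hC⟩ := (isBigO_integral_XiPsi_sq hδ hν hO).exists_pos
  obtain ⟨X₀, hX₀⟩ := eventually_atTop.1 hC.bound
  refine ⟨C, hC0, max X₀ 1, by positivity, fun X hX => ?_⟩
  have hX0 : 0 < X := zero_lt_one.trans_le ((le_max_right _ _).trans hX)
  calc (1 / X) * ∫ x in X..(2 * X), XiPsi ω x ^ 2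
      ≤ 1 / X * (C * ‖X ^ 3 * log X ^ 4‖) := by
        gcongr
        exact (le_norm_self _).trans (hX₀ X ((le_max_left _ _).trans hX))
    _ = C * X ^ 2 * log X ^ 4 := by
        rw [norm_of_nonneg (by positivity)]
        field

lemma OmegaClass.eventually_differentiableAt {ω : ℝ → ℝ} (hω : OmegaClass ω) :
    ∀ᶠ x in atTop, DifferentiableAt ℝ ω x := by
  filter_upwards [Ioi_mem_atTop 0] with x hx
  exact (hω.contDiff.differentiableOn two_ne_zero).differentiableAt (Ioi_mem_nhds hx)

lemma OmegaClass.isBigO_id {ω : ℝ → ℝ} (hω : OmegaClass ω) : ω =O[atTop] id :=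
  ((hω.tendsto_zero.isBigO_one ℝ).trans_isLittleO (isLittleO_const_id_atTop 1)).isBigO

/-- The sawtooth sum `Ξ_ψ(x;ω)` exhibits near square-root cancellation
in mean square. -/
theorem xi_psi_mean_square (ω : ℝ → ℝ) (hω : OmegaClass ω) :
    ∃ C > (0 : ℝ), ∃ X₀ > (0 : ℝ), ∀ X ≥ X₀,
      (1 / X) * ∫ x in X..(2 * X), XiPsi ω x ^ 2 ≤ C * X ^ 2 * Real.log X ^ 4 :=
  xi_psi_mean_square_general one_half_pos hω.eventually_differentiableAt hω.isBigO_id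
    (hω.deriv_small.mono fun x hx => by linarith [(abs_lt.1 hx).1])
end
end

section
/- Let ω ∈ Ω. There exists a unique Borel probability measure μ_ω on ℝ such that ∫_ℝ α^j dμ_ω(α) = (j!/(2^{j/2}·(j/2)!))·L_j(ω) for every even integer j ≥ 0 and ∫_ℝ α^j dμ_ω(α) = 0 for every odd integer j ≥ 1. -/
open MeasureTheory Filter Real

noncomputable section

/-!
*Existence.* If `Y` is `ω log ω` at a uniform point of `[X, 2X]`, divided by its quadratic mean, and
`Z` is an independent standard Gaussian, then the moments of `Z * Y` are
`gaussMoment j * Mom j X ω / Mom 2 X ω ^ (j / 2)` for even `j` and `0` for odd `j`. The set of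
moment sequences is closed under pointwise limits: bounded second moments give tightness, hence a
weakly convergent subsequence, and the bound on the moment of order `2 * j` makes `x ^ j` uniformly
integrable along it.

*Uniqueness.* The difference of the characteristic functions of two solutions vanishes to infinite
order at `0`, and its derivatives are bounded by a log-convex sequence of absolute moments.
Carleman's inequality turns the divergence hypothesis into divergence of the series of ratios of
consecutive bounds, so the difference is identically `0` by the Denjoy–Carleman theorem. The latter
is proved by Bang's argument: a point where the first `N + 1` derivatives are tiny can be moved by
the `N`-th ratio (up to a factor `e`) at the cost of one derivative, so the divergence of the series
allows one to reach any point.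
-/

section DenjoyCarleman

open scoped ContDiff

variable {E : Type*} [NormedAddCommGroup E] [NormedSpace ℝ E] {f : ℝ → E} {M : ℕ → ℝ}

/-- The smallness condition of Bang's proof of the Denjoy–Carleman theorem: at the point `x` the
`j`-th derivative of `f` is at most `e^(j - N)` times its a priori bound `M j`. Only the orders
`j < N` carry information, and a point where `f` vanishes to infinite order satisfies it for
every `N`. -/
def IsBangSmall (f : ℝ → E) (M : ℕ → ℝ) (N : ℕ) (x : ℝ) : Prop :=
  ∀ j : ℕ, ‖iteratedDeriv j f x‖ ≤ exp ((j : ℝ) - N) * M j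

lemma hasDerivAt_iteratedDeriv (hf : ContDiff ℝ ∞ f) (n : ℕ) (t : ℝ) :
    HasDerivAt (iteratedDeriv n f) (iteratedDeriv (n + 1) f t) t := by
  rw [iteratedDeriv_succ]
  exact (hf.differentiable_iteratedDeriv n (mod_cast ENat.natCast_lt_top n) t).hasDerivAt

lemma IsBangSmall.norm_iteratedDeriv_le_mul_exp (hM : ∀ n, 0 < M n)
    (hmono : Monotone fun n => M (n + 1) / M n) (hf : ContDiff ℝ ∞ f)
    {N : ℕ} (hb : ∀ t, ‖iteratedDeriv (N + 1) f t‖ ≤ M (N + 1)) {x : ℝ}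
    (hx : IsBangSmall f M (N + 1) x) {j : ℕ} (hj : j ≤ N + 1) :
    ∀ t, x ≤ t → ‖iteratedDeriv j f t‖ ≤
      exp ((j : ℝ) - (N + 1 : ℕ)) * M j * exp (exp 1 * (M (N + 1) / M N) * (t - x)) := by
  have hr : 0 < M (N + 1) / M N := div_pos (hM _) (hM _)
  induction hj using Nat.decreasingInduction with
  | self =>
    intro t ht
    rw [sub_self, exp_zero, one_mul]
    refine (hb t).trans (le_mul_of_one_le_right (hM _).le (one_le_exp ?_))
    exact mul_nonneg (by positivity) (sub_nonneg.2 ht)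
  | of_succ j hj ih =>
    set r := M (N + 1) / M N
    have hratio : M (j + 1) ≤ M j * r := by
      rw [← div_le_iff₀' (hM j)]
      exact hmono (Nat.lt_succ_iff.1 hj)
    have hboundary : ∀ t, HasDerivAt (fun t => exp ((j : ℝ) - (N + 1 : ℕ)) * M j *
        exp (exp 1 * r * (t - x)))
        (exp ((j : ℝ) - (N + 1 : ℕ)) * M j * (exp (exp 1 * r * (t - x)) * (exp 1 * r))) t := by
      intro t
      have hlin : HasDerivAt (fun t => exp 1 * r * (t - x)) (exp 1 * r) t := by
        simpa using ((hasDerivAt_id t).sub_const x).const_mul (exp 1 * r)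
      exact hlin.exp.const_mul _
    intro b hxb
    refine image_norm_le_of_norm_deriv_right_le_deriv_boundary (a := x) (b := b)
      (fun t _ => (hasDerivAt_iteratedDeriv hf j t).continuousAt.continuousWithinAt)
      (fun t _ => (hasDerivAt_iteratedDeriv hf j t).hasDerivWithinAt) ?_ hboundary
      (fun t ht => ?_) ⟨hxb, le_rfl⟩
    · simpa using hx j
    · calc ‖iteratedDeriv (j + 1) f t‖
          ≤ exp (((j + 1 : ℕ) : ℝ) - (N + 1 : ℕ)) * M (j + 1) * exp (exp 1 * r * (t - x)) :=
            ih t ht.1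
        _ ≤ exp (((j + 1 : ℕ) : ℝ) - (N + 1 : ℕ)) * (M j * r) * exp (exp 1 * r * (t - x)) := by
            gcongr
        _ = exp ((j : ℝ) - (N + 1 : ℕ)) * M j * (exp (exp 1 * r * (t - x)) * (exp 1 * r)) := by
            rw [Nat.cast_succ j, add_sub_right_comm, exp_add]
            ring

lemma IsBangSmall.add_of_le (hM : ∀ n, 0 < M n) (hmono : Monotone fun n => M (n + 1) / M n)
    (hf : ContDiff ℝ ∞ f) (hb : ∀ n t, ‖iteratedDeriv n f t‖ ≤ M n) {N : ℕ} {x h : ℝ}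
    (hx : IsBangSmall f M (N + 1) x) (h0 : 0 ≤ h) (hh : h ≤ M N / M (N + 1) / exp 1) :
    IsBangSmall f M N (x + h) := by
  have hMN := hM N
  have hMN' := hM (N + 1)
  have hexp : exp 1 * (M (N + 1) / M N) * h ≤ 1 :=
    calc exp 1 * (M (N + 1) / M N) * h
        ≤ exp 1 * (M (N + 1) / M N) * (M N / M (N + 1) / exp 1) := by gcongr
      _ = 1 := by field_simp
  intro j
  have hMj := hM j
  rcases le_or_gt j N with hj | hj
  · have hgrowth := hx.norm_iteratedDeriv_le_mul_exp hM hmono hf (hb _) (hj.trans N.le_succ)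
      (x + h) (le_add_of_nonneg_right h0)
    rw [add_sub_cancel_left] at hgrowth
    calc ‖iteratedDeriv j f (x + h)‖
        ≤ exp ((j : ℝ) - (N + 1 : ℕ)) * M j * exp (exp 1 * (M (N + 1) / M N) * h) := hgrowth
      _ ≤ exp ((j : ℝ) - (N + 1 : ℕ)) * M j * exp 1 := by gcongr
      _ = exp ((j : ℝ) - N) * M j := by
          rw [mul_right_comm, ← exp_add]
          congr 2
          push_cast
          ring
  · have : (N : ℝ) ≤ j := mod_cast hj.le
    exact (hb j _).trans (le_mul_of_one_le_left hMj.le (one_le_exp (by linarith)))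

lemma IsBangSmall.add_of_le_sum (hM : ∀ n, 0 < M n) (hmono : Monotone fun n => M (n + 1) / M n)
    (hf : ContDiff ℝ ∞ f) (hb : ∀ n t, ‖iteratedDeriv n f t‖ ≤ M n) {N m : ℕ} {x h : ℝ}
    (hx : IsBangSmall f M (N + m) x) (h0 : 0 ≤ h)
    (hh : h ≤ ∑ i ∈ Finset.range m, M (N + i) / M (N + i + 1) / exp 1) :
    IsBangSmall f M N (x + h) := by
  have hstep_nonneg : ∀ i, 0 ≤ M (N + i) / M (N + i + 1) / exp 1 := fun i =>
    div_nonneg (div_nonneg (hM _).le (hM _).le) (exp_pos 1).le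
  induction m generalizing x h with
  | zero =>
    have : h = 0 := le_antisymm (by simpa using hh) h0
    simpa [this] using hx
  | succ m ih =>
    rw [Finset.sum_range_succ] at hh
    set δ := M (N + m) / M (N + m + 1) / exp 1
    have hfirst : IsBangSmall f M (N + m) (x + min h δ) :=
      hx.add_of_le hM hmono hf hb (le_min h0 (hstep_nonneg m)) (min_le_right _ _)
    have hremaining : h - min h δ ≤ ∑ i ∈ Finset.range m, M (N + i) / M (N + i + 1) / exp 1 := by
      rcases le_total h δ with hle | hle
      · rw [min_eq_left hle, sub_self]
        exact Finset.sum_nonneg fun i _ => hstep_nonneg i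
      · rw [min_eq_right hle]
        linarith
    simpa using ih hfirst (sub_nonneg.2 (min_le_left _ _)) hremaining

lemma eq_zero_of_iteratedDeriv_eq_zero_of_le (hM : ∀ n, 0 < M n)
    (hmono : Monotone fun n => M (n + 1) / M n) (hf : ContDiff ℝ ∞ f)
    (hb : ∀ n t, ‖iteratedDeriv n f t‖ ≤ M n) (hdiv : ¬ Summable fun n => M n / M (n + 1))
    {a t : ℝ} (ha : ∀ n, iteratedDeriv n f a = 0) (hat : a ≤ t) : f t = 0 := by
  have hsmall : ∀ N, IsBangSmall f M N t := by
    intro N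
    have hdivN : ¬ Summable fun i => M (N + i) / M (N + i + 1) / exp 1 := by
      rw [summable_div_const_iff (exp_ne_zero 1)]
      simpa only [add_comm N] using (summable_nat_add_iff N).not.2 hdiv
    rw [not_summable_iff_tendsto_nat_atTop_of_nonneg fun i =>
      div_nonneg (div_nonneg (hM _).le (hM _).le) (exp_pos 1).le] at hdivN
    obtain ⟨m, hm⟩ := (hdivN.eventually_ge_atTop (t - a)).exists
    have hstart : IsBangSmall f M (N + m) a := fun j => by
      rw [ha, norm_zero]
      exact mul_nonneg (exp_pos _).le (hM j).le
    simpa using hstart.add_of_le_sum hM hmono hf hb (sub_nonneg.2 hat) hm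
  have hlim : Tendsto (fun N : ℕ => exp ((0 : ℕ) - (N : ℝ)) * M 0) atTop (nhds 0) := by
    simpa using (tendsto_exp_neg_atTop_nhds_zero.comp tendsto_natCast_atTop_atTop).mul_const (M 0)
  simpa using ge_of_tendsto' hlim fun N => hsmall N 0

theorem denjoyCarleman (hM : ∀ n, 0 < M n) (hlc : ∀ n, M (n + 1) ^ 2 ≤ M n * M (n + 2))
    (hf : ContDiff ℝ ∞ f) (hb : ∀ n t, ‖iteratedDeriv n f t‖ ≤ M n)
    (hdiv : ¬ Summable fun n => M n / M (n + 1)) {a : ℝ} (ha : ∀ n, iteratedDeriv n f a = 0) :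
    f = 0 := by
  have hmono : Monotone fun n => M (n + 1) / M n := monotone_nat_of_le_succ fun n => by
    rw [div_le_div_iff₀ (hM _) (hM _)]
    linarith [hlc n, sq (M (n + 1)), mul_comm (M n) (M (n + 2))]
  funext t
  rcases le_total a t with hat | hta
  · exact eq_zero_of_iteratedDeriv_eq_zero_of_le hM hmono hf hb hdiv ha hat
  · have hreflect := eq_zero_of_iteratedDeriv_eq_zero_of_le (f := fun x => f (-x)) hM hmono
      (hf.comp contDiff_neg)
      (fun n s => by simpa [iteratedDeriv_comp_neg, norm_smul] using hb n (-s))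
      hdiv (a := -a) (fun n => by simp [iteratedDeriv_comp_neg, ha]) (neg_le_neg hta)
    simpa using hreflect

end DenjoyCarleman

section CarlemanInequality

variable {a : ℕ → ℝ}

lemma add_one_pow_le_exp_pow_mul_factorial (n : ℕ) :
    ((n : ℝ) + 1) ^ n ≤ exp 1 ^ n * n.factorial := by
  induction n with
  | zero => simp
  | succ n ih =>
    calc (((n + 1 : ℕ) : ℝ) + 1) ^ (n + 1)
        = ((n : ℝ) + 1) ^ n * (n + 1) * (1 + ((n + 1 : ℕ) : ℝ)⁻¹) ^ (n + 1) := by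
          rw [← pow_succ, ← mul_pow]
          congr 1
          push_cast
          field_simp
      _ ≤ (exp 1 ^ n * n.factorial) * (n + 1) * exp 1 := by
          gcongr
          exact one_add_inv_pow_le_exp
      _ = exp 1 ^ (n + 1) * (n + 1).factorial := by
          rw [Nat.factorial_succ]
          push_cast
          ring

-- The weights `i + 1` are the ones for which the right-hand side telescopes when summed over `n`.
lemma geomMean_le_weighted_sum (ha : ∀ n, 0 ≤ a n) {n : ℕ} (hn : n ≠ 0) :
    (∏ i ∈ Finset.range n, a i) ^ (n : ℝ)⁻¹ ≤
      exp 1 * ((∑ i ∈ Finset.range n, ((i : ℝ) + 1) * a i) / (n * (n + 1))) := by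
  have hn0 : (0 : ℝ) < n := by positivity
  have hprod : 0 ≤ ∏ i ∈ Finset.range n, a i := Finset.prod_nonneg fun i _ => ha i
  have hamgm : (n.factorial : ℝ) ^ (n : ℝ)⁻¹ * (∏ i ∈ Finset.range n, a i) ^ (n : ℝ)⁻¹ ≤
      (∑ i ∈ Finset.range n, ((i : ℝ) + 1) * a i) / n := by
    have hmean := geom_mean_le_arith_mean (Finset.range n) (fun _ => (1 : ℝ))
      (fun i => ((i : ℝ) + 1) * a i) (fun _ _ => zero_le_one) (by simpa using hn0)
      (fun i _ => mul_nonneg (by positivity) (ha i))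
    have hfactorial : ∏ i ∈ Finset.range n, ((i : ℝ) + 1) = n.factorial := by
      rw [← Finset.prod_range_add_one_eq_factorial]
      push_cast
      rfl
    simpa [Finset.prod_mul_distrib, hfactorial, mul_rpow (Nat.cast_nonneg _) hprod] using hmean
  have hroot : ((n : ℝ) + 1) / exp 1 ≤ (n.factorial : ℝ) ^ (n : ℝ)⁻¹ := by
    rw [le_rpow_inv_iff_of_pos (by positivity) (by positivity) hn0, rpow_natCast, div_pow,
      div_le_iff₀' (by positivity)]
    exact add_one_pow_le_exp_pow_mul_factorial n
  have hchain := (mul_le_mul_of_nonneg_right hroot (rpow_nonneg hprod (n : ℝ)⁻¹)).trans hamgm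
  calc (∏ i ∈ Finset.range n, a i) ^ (n : ℝ)⁻¹
      = exp 1 / (n + 1) * (((n : ℝ) + 1) / exp 1 * (∏ i ∈ Finset.range n, a i) ^ (n : ℝ)⁻¹) := by
        field_simp
    _ ≤ exp 1 / (n + 1) * ((∑ i ∈ Finset.range n, ((i : ℝ) + 1) * a i) / n) := by gcongr
    _ = exp 1 * ((∑ i ∈ Finset.range n, ((i : ℝ) + 1) * a i) / (n * (n + 1))) := by
        field_simp

lemma sum_weighted_sum_div_add (a : ℕ → ℝ) (N : ℕ) :
    ∑ n ∈ Finset.range N, (∑ i ∈ Finset.range (n + 1), ((i : ℝ) + 1) * a i) /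
        (((n + 1 : ℕ) : ℝ) * ((n + 1 : ℕ) + 1)) +
      (∑ i ∈ Finset.range N, ((i : ℝ) + 1) * a i) / (N + 1) = ∑ n ∈ Finset.range N, a n := by
  induction N with
  | zero => simp
  | succ N ih =>
    rw [Finset.sum_range_succ _ N, Finset.sum_range_succ a, ← ih, Finset.sum_range_succ _ N]
    push_cast
    field_simp
    ring

theorem carleman_inequality (ha : ∀ n, 0 ≤ a n) (N : ℕ) :
    ∑ n ∈ Finset.range N, (∏ i ∈ Finset.range (n + 1), a i) ^ ((n + 1 : ℕ) : ℝ)⁻¹ ≤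
      exp 1 * ∑ n ∈ Finset.range N, a n := by
  rw [← sum_weighted_sum_div_add a N, mul_add, Finset.mul_sum]
  refine le_add_of_le_of_nonneg
    (Finset.sum_le_sum fun n _ => geomMean_le_weighted_sum ha n.succ_ne_zero) ?_
  have : 0 ≤ ∑ i ∈ Finset.range N, ((i : ℝ) + 1) * a i :=
    Finset.sum_nonneg fun i _ => mul_nonneg (by positivity) (ha i)
  positivity

lemma summable_geomMean (ha : ∀ n, 0 ≤ a n) (hs : Summable a) :
    Summable fun n : ℕ => (∏ i ∈ Finset.range (n + 1), a i) ^ ((n + 1 : ℕ) : ℝ)⁻¹ :=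
  summable_of_sum_range_le (c := exp 1 * ∑' n, a n)
    (fun _ => rpow_nonneg (Finset.prod_nonneg fun i _ => ha i) _) fun N =>
      (carleman_inequality ha N).trans
        (mul_le_mul_of_nonneg_left (hs.sum_le_tsum _ fun i _ => ha i) (exp_pos 1).le)

lemma summable_rpow_inv_of_summable_ratio {M : ℕ → ℝ} (hM : ∀ n, 0 < M n)
    (hs : Summable fun n => M n / M (n + 1)) :
    Summable fun n : ℕ => (M 0 / M (n + 1)) ^ ((n + 1 : ℕ) : ℝ)⁻¹ := by
  have htelescope : ∀ n, ∏ i ∈ Finset.range n, M i / M (i + 1) = M 0 / M n := by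
    intro n
    induction n with
    | zero => simp [(hM 0).ne']
    | succ n ih => rw [Finset.prod_range_succ, ih, div_mul_div_cancel₀ (hM n).ne']
  simpa only [htelescope] using summable_geomMean (fun n => (div_pos (hM n) (hM (n + 1))).le) hs

end CarlemanInequality

section Determinacy

open scoped ContDiff

variable {ρ : Measure ℝ}

/-- The absolute moment `∫ |x|^n dρ`, which bounds the `n`-th derivative of the characteristic
function of `ρ`. -/
def absMoment (ρ : Measure ℝ) (n : ℕ) : ℝ := ∫ x, |x| ^ n ∂ρ

lemma absMoment_pos {n : ℕ} (hn : Integrable (fun x : ℝ => |x| ^ n) ρ)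
    (hne : ¬ ∀ᵐ x ∂ρ, x = 0) : 0 < absMoment ρ n := by
  have hnonneg : (0 : ℝ → ℝ) ≤ fun x => |x| ^ n := fun x => pow_nonneg (abs_nonneg x) n
  refine (integral_nonneg hnonneg).lt_of_ne' fun hzero => hne ?_
  filter_upwards [(integral_eq_zero_iff_of_nonneg hnonneg hn).1 hzero] with x hx
  exact abs_eq_zero.1 (eq_zero_of_pow_eq_zero hx)

lemma absMoment_sq_le_mul (hρ : ∀ n : ℕ, Integrable (fun x : ℝ => |x| ^ n) ρ) (n : ℕ) :
    absMoment ρ (n + 1) ^ 2 ≤ absMoment ρ n * absMoment ρ (n + 2) := by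
  have hquadratic : ∀ s : ℝ, 0 ≤ absMoment ρ n * (s * s) + -2 * absMoment ρ (n + 1) * s
      + absMoment ρ (n + 2) := by
    intro s
    have hexpand : ∫ x, |x| ^ n * (s - |x|) ^ 2 ∂ρ = absMoment ρ n * (s * s)
        + -2 * absMoment ρ (n + 1) * s + absMoment ρ (n + 2) := by
      have hpoint : ∀ x : ℝ, |x| ^ n * (s - |x|) ^ 2 =
          s * s * |x| ^ n + -2 * s * |x| ^ (n + 1) + |x| ^ (n + 2) := fun x => by ring
      simp only [hpoint]
      rw [integral_add (((hρ n).const_mul _).fun_add ((hρ _).const_mul _)) (hρ _),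
        integral_add ((hρ n).const_mul _) ((hρ _).const_mul _), integral_const_mul,
        integral_const_mul]
      simp only [absMoment]
      ring
    rw [← hexpand]
    exact integral_nonneg fun x => by positivity
  have hdiscrim := discrim_le_zero hquadratic
  rw [discrim] at hdiscrim
  linarith

lemma memLp_id_of_integrable_abs_pow (hρ : ∀ n : ℕ, Integrable (fun x : ℝ => |x| ^ n) ρ) (n : ℕ) :
    MemLp id n ρ := by
  rcases eq_or_ne n 0 with rfl | hn
  · simpa using aestronglyMeasurable_id
  · rw [← integrable_norm_rpow_iff aestronglyMeasurable_id (mod_cast hn)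
      (ENNReal.natCast_ne_top n)]
    simpa using hρ n

lemma contDiff_charFun_of_integrable_abs_pow [IsFiniteMeasure ρ]
    (hρ : ∀ n : ℕ, Integrable (fun x : ℝ => |x| ^ n) ρ) : ContDiff ℝ ∞ (charFun ρ) :=
  contDiff_charFun' (memLp_id_of_integrable_abs_pow hρ)

lemma norm_iteratedDeriv_charFun_le [IsFiniteMeasure ρ]
    (hρ : ∀ n : ℕ, Integrable (fun x : ℝ => |x| ^ n) ρ) (n : ℕ) (t : ℝ) :
    ‖iteratedDeriv n (charFun ρ) t‖ ≤ absMoment ρ n := by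
  rw [iteratedDeriv_charFun (memLp_id_of_integrable_abs_pow hρ n), norm_mul, norm_pow,
    Complex.norm_I, one_pow, one_mul]
  refine (norm_integral_le_integral_norm _).trans_eq (integral_congr_ae (.of_forall fun x => ?_))
  simp only [norm_mul]
  rw [← Complex.ofReal_mul, Complex.norm_exp_ofReal_mul_I]
  simp

lemma eq_of_integral_pow_eq_of_not_summable {μ ν : Measure ℝ} [IsFiniteMeasure μ]
    [IsFiniteMeasure ν] (hμ : ∀ n : ℕ, Integrable (fun x : ℝ => |x| ^ n) μ)
    (hν : ∀ n : ℕ, Integrable (fun x : ℝ => |x| ^ n) ν)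
    (heq : ∀ n : ℕ, ∫ x, x ^ n ∂μ = ∫ x, x ^ n ∂ν) (hne : ¬ ∀ᵐ x ∂(μ + ν), x = 0)
    (hdiv : ¬ Summable fun n => absMoment (μ + ν) n / absMoment (μ + ν) (n + 1)) : μ = ν := by
  have hadd : ∀ n : ℕ, Integrable (fun x : ℝ => |x| ^ n) (μ + ν) :=
    fun n => (hμ n).add_measure (hν n)
  have hderiv : ∀ n t, iteratedDeriv n (charFun μ - charFun ν) t =
      iteratedDeriv n (charFun μ) t - iteratedDeriv n (charFun ν) t := fun n t =>
    iteratedDeriv_sub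
      ((contDiff_charFun_of_integrable_abs_pow hμ).contDiffAt.of_le (mod_cast le_top))
      ((contDiff_charFun_of_integrable_abs_pow hν).contDiffAt.of_le (mod_cast le_top))
  refine Measure.ext_of_charFun (sub_eq_zero.1 (denjoyCarleman (a := 0)
    (fun n => absMoment_pos (hadd n) hne) (absMoment_sq_le_mul hadd)
    ((contDiff_charFun_of_integrable_abs_pow hμ).sub (contDiff_charFun_of_integrable_abs_pow hν))
    (fun n t => ?_) hdiv fun n => ?_))
  · rw [hderiv, absMoment, integral_add_measure (hμ n) (hν n)]
    exact (norm_sub_le _ _).trans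
      (add_le_add (norm_iteratedDeriv_charFun_le hμ n t) (norm_iteratedDeriv_charFun_le hν n t))
  · rw [hderiv, iteratedDeriv_charFun_zero (memLp_id_of_integrable_abs_pow hμ n),
      iteratedDeriv_charFun_zero (memLp_id_of_integrable_abs_pow hν n), heq, sub_self]

theorem eq_of_integral_pow_eq_of_carleman {μ ν : Measure ℝ} [IsProbabilityMeasure μ]
    [IsProbabilityMeasure ν] (hμ : ∀ n : ℕ, Integrable (fun x : ℝ => x ^ n) μ)
    (hν : ∀ n : ℕ, Integrable (fun x : ℝ => x ^ n) ν)
    (heq : ∀ n : ℕ, ∫ x, x ^ n ∂μ = ∫ x, x ^ n ∂ν)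
    (hC : ¬ Summable fun k : ℕ =>
      (∫ x, x ^ (2 * (k + 1)) ∂μ) ^ ((-1 : ℝ) / (2 * ((k : ℝ) + 1)))) : μ = ν := by
  have hμ' : ∀ n : ℕ, Integrable (fun x : ℝ => |x| ^ n) μ := fun n => by simpa using (hμ n).abs
  have hν' : ∀ n : ℕ, Integrable (fun x : ℝ => |x| ^ n) ν := fun n => by simpa using (hν n).abs
  have heven : ∀ k, absMoment (μ + ν) (2 * k) = 2 * ∫ x, x ^ (2 * k) ∂μ := by
    intro k
    rw [absMoment, integral_add_measure (hμ' _) (hν' _)]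
    simp only [(even_two_mul k).pow_abs]
    linarith [heq (2 * k)]
  have hne : ¬ ∀ᵐ x ∂(μ + ν), x = 0 := by
    intro hzero
    refine hC (summable_zero.congr fun k => ?_)
    have hmoment : ∫ x, x ^ (2 * (k + 1)) ∂μ = 0 := integral_eq_zero_of_ae <| by
      filter_upwards [(ae_add_measure_iff.1 hzero).1] with x hx
      simp [hx]
    -- `0 ^ y = 0` for `y ≠ 0`, negative `y` included.
    rw [hmoment, zero_rpow]
    exact div_ne_zero (by norm_num) (by positivity)
  have hpos : ∀ n, 0 < absMoment (μ + ν) n :=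
    fun n => absMoment_pos ((hμ' n).add_measure (hν' n)) hne
  refine eq_of_integral_pow_eq_of_not_summable hμ' hν' heq hne fun hs => hC ?_
  refine ((summable_rpow_inv_of_summable_ratio hpos hs).comp_injective
    (i := fun k : ℕ => 2 * k + 1) fun _ _ h => by simpa using h).congr fun k => ?_
  have hzeroth : absMoment (μ + ν) 0 = 2 := by simpa using heven 0
  have hmoment : 0 < ∫ x, x ^ (2 * (k + 1)) ∂μ := by linarith [hpos (2 * (k + 1)), heven (k + 1)]
  rw [Function.comp_apply, hzeroth, show 2 * k + 1 + 1 = 2 * (k + 1) by ring, heven,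
    div_mul_cancel_left₀ two_ne_zero, inv_rpow hmoment.le, ← rpow_neg hmoment.le]
  congr 1
  push_cast
  rw [neg_div, one_div]

end Determinacy

section Truncation

open scoped NNReal BoundedContinuousFunction

/-- Truncation of a real number to the interval `[-R, R]`. -/
def clamp (R : ℝ≥0) : ℝ →ᵇ ℝ :=
  BoundedContinuousFunction.ofNormedAddCommGroup (fun y => max (-(R : ℝ)) (min y R)) (by fun_prop)
    R fun y => abs_le.2 ⟨le_max_left _ _, max_le (neg_le_self R.2) (min_le_right _ _)⟩

lemma abs_sub_clamp_le {R : ℝ≥0} (hR : 0 < R) (y : ℝ) : |y - clamp R y| ≤ y ^ 2 / R := by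
  have hR' : (0 : ℝ) < R := hR
  rw [show clamp R y = max (-(R : ℝ)) (min y R) from rfl, le_div_iff₀ hR']
  rcases le_total y R with h | h
  · rw [min_eq_left h]
    rcases le_total (-(R : ℝ)) y with h' | h'
    · rw [max_eq_right h', sub_self, abs_zero, zero_mul]
      exact sq_nonneg y
    · rw [max_eq_left h', abs_of_nonpos (by linarith)]
      nlinarith
  · rw [min_eq_right h, max_eq_right (by linarith), abs_of_nonneg (sub_nonneg.2 h)]
    nlinarith

lemma abs_integral_sub_integral_clamp_le {α : Type*} [MeasurableSpace α] {ρ : Measure α}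
    [IsFiniteMeasure ρ] {g : α → ℝ} (hg : MemLp g 2 ρ) {R : ℝ≥0} (hR : 0 < R) :
    |∫ x, g x ∂ρ - ∫ x, clamp R (g x) ∂ρ| ≤ (∫ x, g x ^ 2 ∂ρ) / R := by
  have hint : Integrable g ρ := hg.integrable one_le_two
  have hclamp : Integrable (fun x => clamp R (g x)) ρ :=
    .of_bound ((clamp R).continuous.comp_aestronglyMeasurable hg.1) ‖clamp R‖
      (.of_forall fun x => (clamp R).norm_coe_le_norm (g x))
  rw [← integral_sub hint hclamp, ← integral_div]
  exact abs_integral_le_integral_abs.trans (integral_mono (hint.sub hclamp).abs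
    (hg.integrable_sq.div_const _) fun x => abs_sub_clamp_le hR (g x))

end Truncation

section WeakConvergence

open scoped Topology NNReal ENNReal

variable {Ω : Type*} [MeasurableSpace Ω] [TopologicalSpace Ω] [OpensMeasurableSpace Ω]

lemma integrable_and_integral_le_of_tendsto [HasOuterApproxClosed Ω]
    {ν : ℕ → ProbabilityMeasure Ω} {μ : ProbabilityMeasure Ω} (hν : Tendsto ν atTop (𝓝 μ))
    {g : Ω → ℝ} (hg : Continuous g) (hg0 : 0 ≤ g) (hint : ∀ n, Integrable g (ν n : Measure Ω))
    {C : ℝ} (hC : ∀ n, ∫ x, g x ∂(ν n : Measure Ω) ≤ C) :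
    Integrable g (μ : Measure Ω) ∧ ∫ x, g x ∂(μ : Measure Ω) ≤ C := by
  have hlintegral : ∫⁻ x, ENNReal.ofReal (g x) ∂(μ : Measure Ω) ≤ ENNReal.ofReal C := by
    refine (lintegral_le_liminf_lintegral_of_forall_isOpen_measure_le_liminf_measure hg hg0
      fun G hG => ProbabilityMeasure.le_liminf_measure_open_of_tendsto hν hG).trans
      (liminf_le_of_frequently_le' (.of_forall fun n => ?_))
    rw [← ofReal_integral_eq_lintegral_ofReal (hint n) (.of_forall hg0)]
    exact ENNReal.ofReal_le_ofReal (hC n)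
  have hC0 : 0 ≤ C := (integral_nonneg hg0).trans (hC 0)
  refine ⟨⟨hg.aestronglyMeasurable, ?_⟩, ?_⟩
  · rw [hasFiniteIntegral_iff_ofReal (.of_forall hg0)]
    exact hlintegral.trans_lt ENNReal.ofReal_lt_top
  · rw [integral_eq_lintegral_of_nonneg_ae (.of_forall hg0) hg.aestronglyMeasurable]
    exact ENNReal.toReal_le_of_le_ofReal hC0 hlintegral

theorem tendsto_integral_of_integral_sq_le [HasOuterApproxClosed Ω]
    {ν : ℕ → ProbabilityMeasure Ω} {μ : ProbabilityMeasure Ω} (hν : Tendsto ν atTop (𝓝 μ))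
    {g : Ω → ℝ} (hg : Continuous g) (hL2 : ∀ n, MemLp g 2 (ν n : Measure Ω))
    {C : ℝ} (hC : ∀ n, ∫ x, g x ^ 2 ∂(ν n : Measure Ω) ≤ C) :
    MemLp g 2 (μ : Measure Ω) ∧
      Tendsto (fun n => ∫ x, g x ∂(ν n : Measure Ω)) atTop (𝓝 (∫ x, g x ∂(μ : Measure Ω))) := by
  obtain ⟨hsq, hsq_le⟩ := integrable_and_integral_le_of_tendsto hν (hg.pow 2)
    (fun x => sq_nonneg (g x)) (fun n => (hL2 n).integrable_sq) hC
  have hL2μ := (memLp_two_iff_integrable_sq hg.aestronglyMeasurable).2 hsq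
  have herror : Tendsto (fun R : ℝ≥0 => C / (R : ℝ)) atTop (𝓝 0) :=
    tendsto_const_nhds.div_atTop (NNReal.tendsto_coe_atTop.2 tendsto_id)
  have huniform : TendstoUniformly (fun (R : ℝ≥0) n => ∫ x, clamp R (g x) ∂(ν n : Measure Ω))
      (fun n => ∫ x, g x ∂(ν n : Measure Ω)) atTop := by
    refine Metric.tendstoUniformly_iff.2 fun ε hε => ?_
    filter_upwards [herror.eventually_lt_const hε, eventually_gt_atTop 0] with R hRε hR n
    refine ((abs_integral_sub_integral_clamp_le (hL2 n) hR).trans ?_).trans_lt hRε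
    gcongr
    exact hC n
  have hclamp : Tendsto (fun R : ℝ≥0 => ∫ x, clamp R (g x) ∂(μ : Measure Ω)) atTop
      (𝓝 (∫ x, g x ∂(μ : Measure Ω))) := by
    refine tendsto_iff_dist_tendsto_zero.2
      (squeeze_zero' (.of_forall fun _ => dist_nonneg) ?_ herror)
    filter_upwards [eventually_gt_atTop 0] with R hR
    rw [dist_comm]
    refine (abs_integral_sub_integral_clamp_le hL2μ hR).trans ?_
    gcongr
    exact hsq_le
  exact ⟨hL2μ, huniform.tendsto_of_eventually_tendsto (.of_forall fun R =>
    ProbabilityMeasure.tendsto_iff_forall_integral_tendsto.1 hν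
      ((clamp R).compContinuous ⟨g, hg⟩)) hclamp⟩

lemma isTightMeasureSet_of_lintegral_enorm_pow_le {E : Type*} [NormedAddCommGroup E]
    [ProperSpace E] [MeasurableSpace E] [BorelSpace E] {S : Set (Measure E)} {p : ℕ} (hp : p ≠ 0)
    {C : ℝ≥0∞} (hC : C ≠ ∞) (hS : ∀ μ ∈ S, ∫⁻ x, ‖x‖ₑ ^ p ∂μ ≤ C) : IsTightMeasureSet S := by
  have hlim : Tendsto (fun r : ℝ => C / ENNReal.ofReal r ^ p) atTop (𝓝 0) := by
    simpa [hp] using ENNReal.Tendsto.const_div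
      (ENNReal.Tendsto.pow (n := p) ENNReal.tendsto_ofReal_atTop) (.inr hC)
  refine isTightMeasureSet_of_tendsto_measure_norm_gt
    (tendsto_of_tendsto_of_tendsto_of_le_of_le' tendsto_const_nhds hlim
      (.of_forall fun _ => zero_le) ?_)
  filter_upwards [eventually_gt_atTop 0] with r hr
  refine iSup₂_le fun μ hμ => ?_
  calc μ {x | r < ‖x‖}
      ≤ μ {x | ENNReal.ofReal r ^ p ≤ ‖x‖ₑ ^ p} := by
        refine measure_mono fun x hx => ?_
        rw [Set.mem_ofPred_eq, ← ofReal_norm]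
        gcongr
        exact le_of_lt hx
    _ ≤ (∫⁻ x, ‖x‖ₑ ^ p ∂μ) / ENNReal.ofReal r ^ p :=
        meas_ge_le_lintegral_div (by fun_prop) (by simp [hr]) (by simp)
    _ ≤ C / ENNReal.ofReal r ^ p := by
        gcongr
        exact hS μ hμ

end WeakConvergence

section MomentSequences

open scoped Topology

/-- The sequence `c` consists of the moments of a Borel probability measure on `ℝ`, all of which
are required to be finite (a divergent moment is never recorded as the junk value `0`). -/
def IsMomentSeq (c : ℕ → ℝ) : Prop :=
  ∃ μ : ProbabilityMeasure ℝ,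
    ∀ j : ℕ, Integrable (fun x : ℝ => x ^ j) (μ : Measure ℝ) ∧ ∫ x, x ^ j ∂(μ : Measure ℝ) = c j

lemma exists_subseq_tendsto_of_integral_sq_le {P : ℕ → ProbabilityMeasure ℝ} {C : ℝ}
    (hint : ∀ n, Integrable (fun x : ℝ => x ^ 2) (P n : Measure ℝ))
    (hC : ∀ n, ∫ x, x ^ 2 ∂(P n : Measure ℝ) ≤ C) :
    ∃ μ : ProbabilityMeasure ℝ, ∃ φ : ℕ → ℕ, StrictMono φ ∧ Tendsto (P ∘ φ) atTop (𝓝 μ) := by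
  have htight : IsTightMeasureSet {((μ : ProbabilityMeasure ℝ) : Measure ℝ) | μ ∈ Set.range P} := by
    refine isTightMeasureSet_of_lintegral_enorm_pow_le two_ne_zero
      (ENNReal.ofReal_ne_top (r := C)) ?_
    rintro _ ⟨_, ⟨n, rfl⟩, rfl⟩
    simp only [← enorm_pow]
    rw [← ofReal_integral_norm_eq_lintegral_enorm (hint n)]
    simpa using ENNReal.ofReal_le_ofReal (hC n)
  obtain ⟨μ, -, φ, hφ, hlim⟩ := (isCompact_closure_of_isTightMeasureSet htight).tendsto_subseq
    fun n => subset_closure (Set.mem_range_self n)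
  exact ⟨μ, φ, hφ, hlim⟩

theorem isClosed_setOf_isMomentSeq : IsClosed {c | IsMomentSeq c} := by
  refine IsSeqClosed.isClosed fun c d hc hcd => ?_
  choose P hP using hc
  have hbounded : ∀ j, ∃ C, ∀ n, c n j ≤ C := fun j =>
    (tendsto_pi_nhds.1 hcd j).bddAbove_range.imp fun C hC n => hC (Set.mem_range_self n)
  choose C hC using hbounded
  obtain ⟨μ, φ, hφ, hlim⟩ := exists_subseq_tendsto_of_integral_sq_le
    (fun n => (hP n 2).1) (fun n => (hP n 2).2.trans_le (hC 2 n))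
  refine ⟨μ, fun j => ?_⟩
  have hL2 : ∀ n, MemLp (fun x : ℝ => x ^ j) 2 (P n : Measure ℝ) := fun n =>
    (memLp_two_iff_integrable_sq (by fun_prop)).2 (by
      simpa only [← pow_mul] using (hP n _).1)
  obtain ⟨hL2μ, hconv⟩ := tendsto_integral_of_integral_sq_le hlim (continuous_pow j)
    (fun n => hL2 (φ n)) (C := C (j * 2)) (fun n => by
      simpa only [← pow_mul, Function.comp_apply] using (hP (φ n) _).2.trans_le (hC _ _))
  refine ⟨hL2μ.integrable one_le_two, tendsto_nhds_unique hconv ?_⟩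
  exact (((tendsto_pi_nhds.1 hcd j).comp hφ.tendsto_atTop).congr fun n =>
    (hP (φ n) j).2.symm)

lemma isMomentSeq_map {α : Type*} [MeasurableSpace α] {P : Measure α} [IsProbabilityMeasure P]
    {Y : α → ℝ} (hY : AEMeasurable Y P) (hint : ∀ j : ℕ, Integrable (fun x => Y x ^ j) P) :
    IsMomentSeq fun j => ∫ x, Y x ^ j ∂P :=
  ⟨⟨P.map Y, Measure.isProbabilityMeasure_map hY⟩, fun j =>
    ⟨(integrable_map_measure (by fun_prop) hY).2 (hint j), integral_map hY (by fun_prop)⟩⟩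

lemma IsMomentSeq.mul {c d : ℕ → ℝ} (hc : IsMomentSeq c) (hd : IsMomentSeq d) :
    IsMomentSeq (c * d) := by
  obtain ⟨μ, hc⟩ := hc
  obtain ⟨ν, hd⟩ := hd
  have hprod := isMomentSeq_map (P := (μ : Measure ℝ).prod ν) (Y := fun p => p.1 * p.2)
    (by fun_prop) fun j => by simpa only [mul_pow] using (hc j).1.mul_prod (hd j).1
  convert hprod using 2 with j
  simp only [mul_pow, Pi.mul_apply]
  rw [integral_prod_mul (fun x : ℝ => x ^ j) (fun x : ℝ => x ^ j), (hc j).2, (hd j).2]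

lemma isMomentSeq_pow (a : ℝ) : IsMomentSeq fun j => a ^ j := by
  simpa using isMomentSeq_map (P := Measure.dirac a) (Y := id) (by fun_prop)
    fun j => by simpa using integrable_dirac (by simp)

lemma isMomentSeq_average {α : Type*} [MeasurableSpace α] {P : Measure α} [IsFiniteMeasure P]
    [NeZero P] {Y : α → ℝ} (hint : ∀ j : ℕ, Integrable (fun x => Y x ^ j) P) :
    IsMomentSeq fun j => ⨍ x, Y x ^ j ∂P := by
  have hscaled : ∀ j : ℕ, Integrable (fun x => Y x ^ j) ((P Set.univ)⁻¹ • P) := fun j =>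
    (hint j).smul_measure (by simp [NeZero.ne P])
  exact isMomentSeq_map (by simpa using (hscaled 1).1.aemeasurable) hscaled

end MomentSequences

section Gaussian

open ProbabilityTheory

lemma integrable_pow_gaussianReal (j : ℕ) : Integrable (fun x : ℝ => x ^ j) (gaussianReal 0 1) :=
  ((memLp_id_gaussianReal (μ := 0) (v := 1) j).integrable_norm_pow').mono' (by fun_prop)
    (.of_forall fun x => by simp)

lemma integral_odd_pow_gaussianReal {j : ℕ} (hj : Odd j) : ∫ x, x ^ j ∂(gaussianReal 0 1) = 0 := by
  have hsymm : ∫ x, x ^ j ∂((gaussianReal 0 1).map fun x => -x)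
      = ∫ x, (-x) ^ j ∂(gaussianReal 0 1) := integral_map (by fun_prop) (by fun_prop)
  rw [gaussianReal_map_neg, neg_zero] at hsymm
  simp only [hj.neg_pow, integral_neg] at hsymm
  linarith

lemma gaussMoment_two_mul (k : ℕ) : gaussMoment (2 * k) = ((2 * k - 1).doubleFactorial : ℝ) := by
  have hfactorial : (2 * k).factorial = (2 * k).doubleFactorial * (2 * k - 1).doubleFactorial := by
    cases k with
    | zero => rfl
    | succ k => exact Nat.factorial_eq_mul_doubleFactorial (2 * k + 1)
  rw [gaussMoment, hfactorial, Nat.doubleFactorial_two_mul, Nat.mul_div_cancel_left k two_pos]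
  push_cast
  field_simp

lemma integral_Ioi_pow_mul_exp_neg_sq_div_two (k : ℕ) :
    ∫ x in Set.Ioi (0 : ℝ), x ^ (2 * k) * exp (-x ^ 2 / 2) =
      (2 * k - 1).doubleFactorial * (√(2 * π) / 2) := by
  have hgamma := integral_rpow_mul_exp_neg_mul_rpow (p := 2) (q := (2 * k : ℕ)) (b := 1 / 2)
    two_pos (by linarith [(2 * k).cast_nonneg (α := ℝ)]) (by norm_num)
  have hhalf : (((2 * k : ℕ) : ℝ) + 1) / 2 = k + 1 / 2 := by
    push_cast
    ring
  have hpow : ((1 : ℝ) / 2) ^ (-((k : ℝ) + 1 / 2)) = 2 ^ k * √2 := by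
    rw [one_div, inv_rpow two_pos.le, ← rpow_neg two_pos.le, neg_neg, rpow_add two_pos,
      rpow_natCast, sqrt_eq_rpow, one_div]
  rw [neg_div, hhalf, Gamma_nat_add_half, hpow] at hgamma
  calc ∫ x in Set.Ioi (0 : ℝ), x ^ (2 * k) * exp (-x ^ 2 / 2)
      = ∫ x in Set.Ioi (0 : ℝ), x ^ ((2 * k : ℕ) : ℝ) * exp (-(1 / 2) * x ^ (2 : ℝ)) := by
        simp only [rpow_natCast, rpow_two, neg_mul, one_div_mul_eq_div, neg_div]
    _ = (2 * k - 1).doubleFactorial * (√(2 * π) / 2) := by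
        rw [hgamma, sqrt_mul two_pos.le]
        field_simp

lemma integral_even_pow_gaussianReal (k : ℕ) :
    ∫ x, x ^ (2 * k) ∂(gaussianReal 0 1) = gaussMoment (2 * k) := by
  have hdensity : ∀ x : ℝ, gaussianPDFReal 0 1 x • x ^ (2 * k) =
      (√(2 * π))⁻¹ * (|x| ^ (2 * k) * exp (-|x| ^ 2 / 2)) := by
    intro x
    simp only [gaussianPDFReal, NNReal.coe_one, mul_one, sub_zero, smul_eq_mul, sq_abs,
      (even_two_mul k).pow_abs]
    ring
  rw [integral_gaussianReal_eq_integral_smul one_ne_zero, integral_congr_ae (.of_forall hdensity),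
    integral_const_mul, integral_comp_abs (f := fun x => x ^ (2 * k) * exp (-x ^ 2 / 2)),
    integral_Ioi_pow_mul_exp_neg_sq_div_two, gaussMoment_two_mul]
  field_simp

end Gaussian

section GaussianMixture

open ProbabilityTheory

/-- The moments of `Z * Y`, where `Z` is a standard Gaussian independent of `Y` and `L j` is the
moment of `Y` of even order `j`. -/
def gaussianMixtureMoment (L : ℕ → ℝ) (j : ℕ) : ℝ := if Even j then gaussMoment j * L j else 0

lemma integral_pow_gaussianReal (j : ℕ) :
    ∫ x, x ^ j ∂(gaussianReal 0 1) = gaussianMixtureMoment 1 j := by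
  rcases Nat.even_or_odd j with hj | hj
  · obtain ⟨k, rfl⟩ := hj.two_dvd
    simp [gaussianMixtureMoment, integral_even_pow_gaussianReal]
  · simp [gaussianMixtureMoment, integral_odd_pow_gaussianReal hj, Nat.not_even_iff_odd.2 hj]

lemma isMomentSeq_gaussianMixtureMoment_one : IsMomentSeq (gaussianMixtureMoment 1) :=
  ⟨⟨gaussianReal 0 1, inferInstance⟩, fun j =>
    ⟨integrable_pow_gaussianReal j, integral_pow_gaussianReal j⟩⟩

lemma IsMomentSeq.gaussianMixtureMoment_div {c : ℕ → ℝ} (hc : IsMomentSeq c) :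
    IsMomentSeq (gaussianMixtureMoment fun j => c j / c 2 ^ (j / 2)) := by
  have hc2 : 0 ≤ c 2 := by
    obtain ⟨μ, hμ⟩ := hc
    rw [← (hμ 2).2]
    exact integral_nonneg fun x => sq_nonneg x
  have hmul := (isMomentSeq_gaussianMixtureMoment_one.mul hc).mul (isMomentSeq_pow (√(c 2))⁻¹)
  convert hmul using 1
  funext j
  rcases Nat.even_or_odd j with hj | hj
  · obtain ⟨k, rfl⟩ := hj.two_dvd
    simp [gaussianMixtureMoment, pow_mul, sq_sqrt hc2, mul_assoc, div_eq_mul_inv]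
  · simp [gaussianMixtureMoment, Nat.not_even_iff_odd.2 hj]

end GaussianMixture

section DyadicAverages

lemma isMomentSeq_intervalAverage {f : ℝ → ℝ} {a b : ℝ} (hab : a < b)
    (hf : ∀ j : ℕ, IntervalIntegrable (fun x => f x ^ j) volume a b) :
    IsMomentSeq fun j => ⨍ x in a..b, f x ^ j := by
  have : NeZero (volume.restrict (Set.uIoc a b)) := ⟨by simp [Set.uIoc_of_le hab.le, hab]⟩
  have : IsFiniteMeasure (volume.restrict (Set.uIoc a b)) := ⟨by simp [Set.uIoc_of_le hab.le]⟩
  refine isMomentSeq_average fun j => ?_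
  rw [Set.uIoc_of_le hab.le]
  exact (hf j).1

theorem unique_measure_with_moments_general {f : ℝ → ℝ} {L : ℕ → ℝ}
    (hf : ∀ᶠ X in atTop, ∀ j : ℕ, IntervalIntegrable (fun x => f x ^ j) volume X (2 * X))
    (hL : ∀ j : ℕ, Even j → Tendsto (fun X => (1 / X * ∫ x in X..(2 * X), f x ^ j) /
      (1 / X * ∫ x in X..(2 * X), f x ^ 2) ^ (j / 2)) atTop (nhds (L j)))
    (hC : ¬ Summable fun k : ℕ =>
      (gaussMoment (2 * (k + 1)) * L (2 * (k + 1))) ^ ((-1 : ℝ) / (2 * ((k : ℝ) + 1)))) :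
    ∃! μ : Measure ℝ, IsProbabilityMeasure μ ∧
      (∀ j : ℕ, Integrable (fun α : ℝ => α ^ j) μ) ∧
      (∀ j : ℕ, Even j → ∫ α, α ^ j ∂μ = gaussMoment j * L j) ∧
      (∀ j : ℕ, Odd j → ∫ α, α ^ j ∂μ = 0) := by
  have hmoments : ∀ᶠ X in atTop, IsMomentSeq (gaussianMixtureMoment fun j =>
      (1 / X * ∫ x in X..(2 * X), f x ^ j) / (1 / X * ∫ x in X..(2 * X), f x ^ 2) ^ (j / 2)) := by
    filter_upwards [hf, eventually_gt_atTop 0] with X hfX hX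
    have := (isMomentSeq_intervalAverage (by linarith : X < 2 * X) hfX).gaussianMixtureMoment_div
    simpa [interval_average_eq, two_mul] using this
  have hlim : IsMomentSeq (gaussianMixtureMoment L) := by
    refine isClosed_setOf_isMomentSeq.mem_of_tendsto (tendsto_pi_nhds.2 fun j => ?_) hmoments
    by_cases hj : Even j
    · simpa [gaussianMixtureMoment, hj] using (hL j hj).const_mul (gaussMoment j)
    · simp [gaussianMixtureMoment, hj]
  obtain ⟨μ, hμ⟩ := hlim
  have hμeven : ∀ j : ℕ, Even j → ∫ α, α ^ j ∂(μ : Measure ℝ) = gaussMoment j * L j :=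
    fun j hj => (hμ j).2.trans (if_pos hj)
  have hμodd : ∀ j : ℕ, Odd j → ∫ α, α ^ j ∂(μ : Measure ℝ) = 0 :=
    fun j hj => (hμ j).2.trans (if_neg (Nat.not_even_iff_odd.2 hj))
  refine ⟨μ, ⟨inferInstance, fun j => (hμ j).1, hμeven, hμodd⟩, ?_⟩
  rintro ν ⟨hν, hνint, hνeven, hνodd⟩
  refine (eq_of_integral_pow_eq_of_carleman (fun j => (hμ j).1) hνint (fun j => ?_) ?_).symm
  · rcases Nat.even_or_odd j with hj | hj
    · rw [hμeven j hj, hνeven j hj]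
    · rw [hμodd j hj, hνodd j hj]
  · simpa only [hμeven _ (even_two_mul _)] using hC

end DyadicAverages

lemma OmegaClass.intervalIntegrable_mul_log_pow {ω : ℝ → ℝ} (hω : OmegaClass ω) {a b : ℝ}
    (ha : 0 < a) (hb : 0 < b) (j : ℕ) :
    IntervalIntegrable (fun x => (ω x * log (ω x)) ^ j) volume a b :=
  ContinuousOn.intervalIntegrable <| (Real.continuous_mul_log.comp_continuousOn
    (hω.contDiff.continuousOn.mono fun _ hx => (lt_min ha hb).trans_le hx.1)).pow j

lemma OmegaClass.not_summable_carleman {ω : ℝ → ℝ} (hω : OmegaClass ω) :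
    ¬ Summable fun k : ℕ => (gaussMoment (2 * (k + 1)) * Llim ω (2 * (k + 1))) ^
      ((-1 : ℝ) / (2 * ((k : ℝ) + 1))) := fun hs =>
  not_tendsto_nhds_of_tendsto_atTop hω.carleman _ hs.hasSum.tendsto_sum_nat

/-- Existence and uniqueness of a probability measure with the prescribed
moments. -/
theorem unique_measure_with_moments (ω : ℝ → ℝ) (hω : OmegaClass ω) :
    ∃! μ : Measure ℝ, IsProbabilityMeasure μ ∧
      (∀ j : ℕ, Integrable (fun α : ℝ => α ^ j) μ) ∧
      (∀ j : ℕ, Even j → ∫ α, α ^ j ∂μ = gaussMoment j * Llim ω j) ∧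
      (∀ j : ℕ, Odd j → ∫ α, α ^ j ∂μ = 0) :=
  unique_measure_with_moments_general ((eventually_gt_atTop 0).mono fun _ hX =>
    hω.intervalIntegrable_mul_log_pow hX (mul_pos two_pos hX)) hω.Llim_exists
    hω.not_summable_carleman
end
end
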